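/- arXiv:1303.5293 — 3 statements merged into one kernel-verified Lean document; each statement's English description precedes it below -/
import Mathlib

section
/- The element w = −z⊗r + Σ_{i,j=1}^n m_ij x_i⊗r_j ∈ V̂⊗V̂⊗V̂ is a superpotential, i.e. (α⊗1⊗1)(w) = (1⊗1⊗α)(w) for every α ∈ V̂*. -/
/-!
Let `ρ` be the cyclic rotation `a ⊗ (b ⊗ c) ↦ b ⊗ (c ⊗ a)`. Then `(1⊗1⊗α) ∘ ρ = α⊗1⊗1`, so it is
enough that `ρ w = w` (`rot_w`). Expanding,
`w = ∑ m_ij (-z x_i x_j + x_i z x_j - x_i x_j z) - ∑ m_ij x_i δ(x_j)`.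
Antisymmetry of `M` makes `ρ` permute the three terms containing `z`. The last sum is sent
to `∑ m_ij δ(x_j) x_i = -∑ m_ij δ(x_i) x_j`, and `δ(r) = 0` says exactly that this equals
`∑ m_ij x_i δ(x_j)`.

The hypothesis `δ(r) = 0` lives in `T(V)`; it is carried to `V̂ ⊗ V̂ ⊗ V̂` by the projection `deg3` of
`T(V)` onto its degree-three part (`leibniz_relation`).
-/

/-!
STATEMENT 1: The element w = −z⊗r + Σ_{i,j} m_ij x_i⊗r_j ∈ V̂⊗V̂⊗V̂ is a
superpotential: (α⊗1⊗1)(w) = (1⊗1⊗α)(w) for every α ∈ V̂*.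
-/

open TensorProduct Matrix

noncomputable section

variable (k : Type) [Field k] (n : ℕ)

/-- The standard basis of `V = k^n`. -/
def x (i : Fin n) : Fin n → k := Pi.single i 1

/-- `V̂ = V ⊕ k·z`. -/
abbrev Vhat (k : Type) [Field k] (n : ℕ) := (Fin n → k) × k

/-- The inclusion `V → V̂`. -/
def inc : (Fin n → k) →ₗ[k] Vhat k n := LinearMap.inl k (Fin n → k) k

/-- The extra degree-one generator `z ∈ V̂`. -/
def zv : Vhat k n := (0, 1)

/-- The basis vector `x_i` seen in `V̂`. -/
def xh (i : Fin n) : Vhat k n := inc k n (x k n i)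

/-- The multiplication embedding `V ⊗ V → T(V)`. -/
def embV : (Fin n → k) ⊗[k] (Fin n → k) →ₗ[k] TensorAlgebra k (Fin n → k) :=
  LinearMap.mul' k (TensorAlgebra k (Fin n → k)) ∘ₗ
    TensorProduct.map (TensorAlgebra.ι k) (TensorAlgebra.ι k)

variable (M : Matrix (Fin n) (Fin n) k)

/-- The relation `r = Σ m_ij x_i ⊗ x_j` as an element of `T(V)`. -/
def rTV : TensorAlgebra k (Fin n → k) :=
  ∑ i : Fin n, ∑ j : Fin n,
    M i j • (TensorAlgebra.ι k (x k n i) * TensorAlgebra.ι k (x k n j))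

/-- `r` as an element of `V̂ ⊗ V̂`. -/
def rT2 : Vhat k n ⊗[k] Vhat k n :=
  ∑ i : Fin n, ∑ j : Fin n, M i j • (xh k n i ⊗ₜ xh k n j)

variable (δ₀ : (Fin n → k) →ₗ[k] (Fin n → k) ⊗[k] (Fin n → k))

/-- `r_i = z⊗x_i − x_i⊗z − δ(x_i)` as an element of `V̂ ⊗ V̂`. -/
def r2 (i : Fin n) : Vhat k n ⊗[k] Vhat k n :=
  zv k n ⊗ₜ xh k n i - xh k n i ⊗ₜ zv k n
    - TensorProduct.map (inc k n) (inc k n) (δ₀ (x k n i))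

/-- The candidate superpotential `w = −z⊗r + Σ_{i,j} m_ij x_i⊗r_j`. -/
def w : Vhat k n ⊗[k] (Vhat k n ⊗[k] Vhat k n) :=
  -(zv k n ⊗ₜ rT2 k n M)
    + ∑ i : Fin n, ∑ j : Fin n, M i j • (xh k n i ⊗ₜ r2 k n δ₀ j)

/-- Left contraction `(α⊗1⊗1) : V̂⊗(V̂⊗V̂) → V̂⊗V̂`. -/
def lc (α : Module.Dual k (Vhat k n)) :
    Vhat k n ⊗[k] (Vhat k n ⊗[k] Vhat k n) →ₗ[k] Vhat k n ⊗[k] Vhat k n :=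
  (TensorProduct.lid k (Vhat k n ⊗[k] Vhat k n)).toLinearMap ∘ₗ
    TensorProduct.map α LinearMap.id

/-- Right contraction `(1⊗1⊗α) : V̂⊗(V̂⊗V̂) → V̂⊗V̂`. -/
def rc (α : Module.Dual k (Vhat k n)) :
    Vhat k n ⊗[k] (Vhat k n ⊗[k] Vhat k n) →ₗ[k] Vhat k n ⊗[k] Vhat k n :=
  (TensorProduct.rid k (Vhat k n ⊗[k] Vhat k n)).toLinearMap ∘ₗ
    TensorProduct.map LinearMap.id α ∘ₗ
      (TensorProduct.assoc k (Vhat k n) (Vhat k n) (Vhat k n)).symm.toLinearMap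

/-- The trilinear map `(a, b, c) ↦ a ⊗ (b ⊗ c)`, from `V × V × V` to `V̂ ⊗ (V̂ ⊗ V̂)`. -/
def tri : MultilinearMap k (fun _ : Fin 3 => Fin n → k)
    (Vhat k n ⊗[k] (Vhat k n ⊗[k] Vhat k n)) where
  toFun v := inc k n (v 0) ⊗ₜ (inc k n (v 1) ⊗ₜ inc k n (v 2))
  map_update_add' := by
    intro inst v i a b
    -- the decidability instance on `Fin 3` is a variable here and has to be made canonical
    obtain rfl : inst = instDecidableEqFin 3 := Subsingleton.elim _ _
    fin_cases i <;> simp [TensorProduct.add_tmul, TensorProduct.tmul_add]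
  map_update_smul' := by
    intro inst v i c a
    obtain rfl : inst = instDecidableEqFin 3 := Subsingleton.elim _ _
    fin_cases i <;>
      simp [TensorProduct.smul_tmul, TensorProduct.tmul_smul]

/-- The projection of `T(V)` onto its degree-three part, followed by `V⊗V⊗V → V̂⊗(V̂⊗V̂)`. -/
def deg3 : TensorAlgebra k (Fin n → k) →ₗ[k] Vhat k n ⊗[k] (Vhat k n ⊗[k] Vhat k n) :=
  PiTensorProduct.lift (tri k n) ∘ₗ
    DirectSum.component k ℕ (fun i => ⨂[k]^i (Fin n → k)) 3 ∘ₗ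
      (TensorAlgebra.toDirectSum (R := k) (M := Fin n → k)).toLinearMap

lemma deg3_ι (a b c : Fin n → k) :
    deg3 k n (TensorAlgebra.ι k a * (TensorAlgebra.ι k b * TensorAlgebra.ι k c)) =
      inc k n a ⊗ₜ (inc k n b ⊗ₜ inc k n c) := by
  have h := TensorAlgebra.toDirectSum_tensorPower_tprod (R := k) (M := Fin n → k) ![a, b, c]
  rw [TensorAlgebra.tprod_apply] at h
  simp only [List.ofFn_succ, List.ofFn_zero, List.prod_cons, List.prod_nil, mul_one] at h
  simp only [deg3, LinearMap.comp_apply, AlgHom.toLinearMap_apply]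
  erw [h]
  erw [DirectSum.component.lof_self]
  rw [PiTensorProduct.lift.tprod]
  rfl

lemma deg3_ι_mul_embV (a : Fin n → k) (s : (Fin n → k) ⊗[k] (Fin n → k)) :
    deg3 k n (TensorAlgebra.ι k a * embV k n s) =
      inc k n a ⊗ₜ TensorProduct.map (inc k n) (inc k n) s := by
  induction s using TensorProduct.induction_on with
  | zero => simp
  | tmul b c => simpa [embV] using deg3_ι k n a b c
  | add s t hs ht => simp only [map_add, mul_add, hs, ht, TensorProduct.tmul_add]

/-- The cyclic rotation `a ⊗ (b ⊗ c) ↦ b ⊗ (c ⊗ a)`. -/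
def rot : Vhat k n ⊗[k] (Vhat k n ⊗[k] Vhat k n) →ₗ[k]
    Vhat k n ⊗[k] (Vhat k n ⊗[k] Vhat k n) :=
  (TensorProduct.assoc k (Vhat k n) (Vhat k n) (Vhat k n)).toLinearMap ∘ₗ
    (TensorProduct.comm k (Vhat k n) (Vhat k n ⊗[k] Vhat k n)).toLinearMap

lemma rot_tmul (a b c : Vhat k n) :
    rot k n (a ⊗ₜ (b ⊗ₜ c)) = b ⊗ₜ (c ⊗ₜ a) := rfl

lemma deg3_embV_mul_ι (c : Fin n → k) (s : (Fin n → k) ⊗[k] (Fin n → k)) :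
    deg3 k n (embV k n s * TensorAlgebra.ι k c) =
      rot k n (inc k n c ⊗ₜ TensorProduct.map (inc k n) (inc k n) s) := by
  induction s using TensorProduct.induction_on with
  | zero => simp
  | tmul a b => simpa [embV, mul_assoc, rot_tmul] using deg3_ι k n a b c
  | add s t hs ht => simp only [map_add, add_mul, hs, ht, TensorProduct.tmul_add]

lemma rc_rot (α : Module.Dual k (Vhat k n)) (t : Vhat k n ⊗[k] (Vhat k n ⊗[k] Vhat k n)) :
    rc k n α (rot k n t) = lc k n α t := by
  induction t using TensorProduct.induction_on with
  | zero => simp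
  | tmul a s => simp [rot, rc, lc]
  | add s t hs ht => simp only [map_add, hs, ht]

/-- The equation `δ(r) = 0`, expanded by the Leibniz rule and read in `V̂ ⊗ V̂ ⊗ V̂`. -/
lemma leibniz_relation
    (δ : TensorAlgebra k (Fin n → k) →ₗ[k] TensorAlgebra k (Fin n → k))
    (hLeib : ∀ a b, δ (a * b) = δ a * b + a * δ b)
    (hδι : ∀ v : Fin n → k, δ (TensorAlgebra.ι k v) = embV k n (δ₀ v))
    (hδr : δ (rTV k n M) = 0) :
    (∑ i : Fin n, ∑ j : Fin n, M i j • rot k n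
        (xh k n j ⊗ₜ[k] TensorProduct.map (inc k n) (inc k n) (δ₀ (x k n i)))) +
      ∑ i : Fin n, ∑ j : Fin n, M i j •
        (xh k n i ⊗ₜ[k] TensorProduct.map (inc k n) (inc k n) (δ₀ (x k n j))) = 0 := by
  have h := congrArg (deg3 k n) hδr
  simpa only [rTV, xh, map_sum, map_smul, hLeib, hδι, map_add, deg3_ι_mul_embV, deg3_embV_mul_ι,
    map_zero, smul_add, Finset.sum_add_distrib] using h

/-- Swapping the summation indices against an antisymmetric matrix changes the sign. -/
lemma sum_swap {E : Type*} [AddCommGroup E] [Module k E] (hMat : Mᵀ = -M)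
    (f : Fin n → Fin n → E) :
    ∑ i, ∑ j, M i j • f j i = -∑ i, ∑ j, M i j • f i j := by
  rw [Finset.sum_comm, ← Finset.sum_neg_distrib]
  refine Finset.sum_congr rfl fun i _ => ?_
  rw [← Finset.sum_neg_distrib]
  refine Finset.sum_congr rfl fun j _ => ?_
  have h : M j i = -M i j := congrFun (congrFun hMat i) j
  rw [h, neg_smul]

/-- `w` is invariant under cyclic rotation. -/
lemma rot_w (hMat : Mᵀ = -M)
    (δ : TensorAlgebra k (Fin n → k) →ₗ[k] TensorAlgebra k (Fin n → k))
    (hLeib : ∀ a b, δ (a * b) = δ a * b + a * δ b)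
    (hδι : ∀ v : Fin n → k, δ (TensorAlgebra.ι k v) = embV k n (δ₀ v))
    (hδr : δ (rTV k n M) = 0) :
    rot k n (w k n M δ₀) = w k n M δ₀ := by
  have h := leibniz_relation k n M δ₀ δ hLeib hδι hδr
  -- `x_i z x_j ↦ z x_j x_i`, `x_i x_j z ↦ x_j z x_i` and `x_i δ(x_j) ↦ δ(x_j) x_i`
  have h1 := sum_swap k n M hMat fun i j => zv k n ⊗ₜ[k] (xh k n i ⊗ₜ[k] xh k n j)
  have h2 := sum_swap k n M hMat fun i j => xh k n i ⊗ₜ[k] (zv k n ⊗ₜ[k] xh k n j)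
  have h3 := sum_swap k n M hMat fun i j => rot k n
    (xh k n j ⊗ₜ[k] TensorProduct.map (inc k n) (inc k n) (δ₀ (x k n i)))
  simp only [w, rT2, r2, TensorProduct.tmul_sum, TensorProduct.tmul_smul, TensorProduct.tmul_sub,
    map_add, map_neg, map_sum, map_smul, map_sub, rot_tmul, smul_sub, Finset.sum_sub_distrib]
  rw [h1, h2, h3, eq_neg_of_add_eq_zero_left h]
  abel

theorem w_is_superpotential
    (hM : IsUnit M.det) (hMat : Mᵀ = -M)
    (δ : TensorAlgebra k (Fin n → k) →ₗ[k] TensorAlgebra k (Fin n → k))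
    (hLeib : ∀ a b, δ (a * b) = δ a * b + a * δ b)
    (hδι : ∀ v : Fin n → k, δ (TensorAlgebra.ι k v) = embV k n (δ₀ v))
    (hδr : δ (rTV k n M) = 0) :
    ∀ α : Module.Dual k (Vhat k n),
      lc k n α (w k n M δ₀) = rc k n α (w k n M δ₀) := by
  intro α
  rw [← rc_rot, rot_w k n M δ₀ hMat δ hLeib hδι hδr]

end
end

section
/- Suppose M is the standard anti-symmetric matrix, write δ(x_i) = Σ_{s,t=1}^n k^i_st x_s⊗x_t for all i, and assume there is an index j such that k^i_jj = 0 for all i = 1,…,n. Then B = A[z;δ̄] is graded coherent (both graded left and graded right coherent). -/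
/-!
The idea is to find a two-sided ideal of `B` that is free as a right and as a left ideal, and whose
quotient is Noetherian.

Let `J` be the ideal generated by the `x_i` with `i ≠ j`. Since `j` is not paired with itself in `r`,
and `δ(x_i)` contains no `x_j ^ 2`, the quotient `B / J` is the commutative polynomial ring in `x_j`
and `z` (`OreData.Presents.exists_quotient`).

The relation `r` rewrites `x_j x_{j'}`, where `j'` is the index paired with `j`, as a combination of the
other `x_i x_{i'}`. Hence `J` is generated as a right ideal by the elements `x_j ^ a x_i` with `i ≠ j`
and either `i ≠ j'` or `a = 0`. These are right linearly independent
(`OreData.Presents.linearIndependent`): `B` acts on the space spanned by the monomials `x_w z ^ e`, with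
`x_j` acting by rewriting and `z` by commutation past the letters. The condition `δ(r) = 0` makes this
action well defined, the elements `x_j ^ a x_i` act by concatenation, and an element of `B` is determined
by its action on the empty monomial.

Left coherence follows from a general criterion (`GradedProj.finitePresentation`). For homogeneous
elements `a_1, …, a_l` with module of syzygies `S`, freeness of `J` as a right ideal gives
`S ∩ J ^ l = J S`, so that `S / J S` embeds in `(B / J) ^ l` and is finitely generated, as `B / J` is
Noetherian; graded Nakayama then shows that `S` is finitely generated.

Right coherence is left coherence of the opposite algebra, which has a presentation of the same form,
with `δ` transposed and negated (`OreData.Presents.opp`).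
-/


/-!
STATEMENT 4: Suppose M is the standard anti-symmetric matrix, write
δ(x_i) = Σ_{s,t} k^i_st x_s⊗x_t, and assume there is an index j with k^i_jj = 0
for all i.  Then B = A[z;δ̄] is graded coherent (graded left and right coherent:
every finitely generated homogeneous one-sided ideal is finitely presented).
-/

open TensorProduct Matrix

noncomputable section

variable (k : Type) [Field k] (n : ℕ)

/-- The multiplication embedding `V̂ ⊗ V̂ → T(V̂)`. -/
def emb2 : (Vhat k n) ⊗[k] (Vhat k n) →ₗ[k] TensorAlgebra k (Vhat k n) :=
  LinearMap.mul' k (TensorAlgebra k (Vhat k n)) ∘ₗ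
    TensorProduct.map (TensorAlgebra.ι k) (TensorAlgebra.ι k)

variable (M : Matrix (Fin n) (Fin n) k)

/-- The relation `r` viewed inside `T(V̂)`. -/
def rhat : TensorAlgebra k (Vhat k n) :=
  ∑ i : Fin n, ∑ j : Fin n,
    M i j • (TensorAlgebra.ι k (inc k n (x k n i)) * TensorAlgebra.ι k (inc k n (x k n j)))

variable (δ₀ : (Fin n → k) →ₗ[k] (Fin n → k) ⊗[k] (Fin n → k))

/-- The Ore relation `r_i = z⊗x_i − x_i⊗z − δ(x_i)` inside `T(V̂)`. -/
def relz (i : Fin n) : TensorAlgebra k (Vhat k n) :=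
  TensorAlgebra.ι k (zv k n) * TensorAlgebra.ι k (inc k n (x k n i))
    - TensorAlgebra.ι k (inc k n (x k n i)) * TensorAlgebra.ι k (zv k n)
    - emb2 k n (TensorProduct.map (inc k n) (inc k n) (δ₀ (x k n i)))

/-- The defining relations of `B = T(V̂)/⟨r, r₁, …, r_n⟩`. -/
def OreRel (a b : TensorAlgebra k (Vhat k n)) : Prop :=
  (a = rhat k n M ∨ ∃ i : Fin n, a = relz k n δ₀ i) ∧ b = 0

/-- `B = A[z;δ̄] ≅ T(V̂)/⟨r, r₁, …, r_n⟩`. -/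
abbrev B := RingQuot (OreRel k n M δ₀)

/-- The projection `π : T(V̂) → B`. -/
def πB : TensorAlgebra k (Vhat k n) →ₐ[k] B k n M δ₀ :=
  RingQuot.mkAlgHom k (OreRel k n M δ₀)

/-- The standard `n×n` anti-symmetric matrix (`n` even), with `m_{i,n+1−i} = 1`
for `1 ≤ i ≤ n/2`, `m_{i,n+1−i} = −1` for `n/2 < i ≤ n` and all other
entries `0` (here written with `0`-based indices). -/
def Mstd (m : ℕ) (hn : n = 2 * m) : Matrix (Fin n) (Fin n) k :=
  fun i j => if (i : ℕ) + (j : ℕ) + 1 = n then (if (i : ℕ) < m then 1 else -1) else 0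


/-! ### A coherence criterion for graded rings -/

/-- An `ℕ`-grading of `R`, given by the projections `p d` onto its homogeneous parts. This form,
unlike a family of submodules, passes to the opposite ring without any transport of instances. -/
structure GradedProj {R : Type} [Ring R] (p : ℕ → R →+ R) : Prop where
  exists_sum : ∀ a, ∃ N, a = ∑ d ∈ Finset.range N, p d a
  proj : ∀ d e a, p d (p e a) = if d = e then p e a else 0
  mul_right : ∀ d e a b, p d (a * p e b) = if e ≤ d then p (d - e) a * p e b else 0
  mul_left : ∀ d e a b, p d (p e a * b) = if e ≤ d then p e a * p (d - e) b else 0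

namespace GradedProj
variable {R : Type} [Ring R] {p : ℕ → R →+ R}

/-- A homogeneous finitely generated left ideal is generated by finitely many homogeneous
elements `a i`, of degrees `g i`. -/
theorem exists_homogeneous_generators (hp : GradedProj p) (I : Ideal R)
    (hI : ∀ a ∈ I, ∀ i, p i a ∈ I) (hfg : I.FG) :
    ∃ (l : ℕ) (a : Fin l → R) (g : Fin l → ℕ), (∀ i, p (g i) (a i) = a i) ∧
      I = Submodule.span R (Set.range a) := by
  classical
  obtain ⟨S, hS⟩ := hfg
  choose N hN using hp.exists_sum
  let S' : Finset (ℕ × R) := S.biUnion fun s => (Finset.range (N s)).image fun d => (d, p d s)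
  have hS' : ∀ t ∈ S', p t.1 t.2 = t.2 ∧ t.2 ∈ I := by
    intro t ht
    simp only [S', Finset.mem_biUnion, Finset.mem_image] at ht
    obtain ⟨s, hs, d, -, rfl⟩ := ht
    refine ⟨by simp [hp.proj], hI _ ?_ _⟩
    rw [← hS]
    exact Submodule.subset_span hs
  refine ⟨S'.card, fun i => (S'.equivFin.symm i).1.2, fun i => (S'.equivFin.symm i).1.1,
    fun i => (hS' _ (S'.equivFin.symm i).2).1, le_antisymm ?_ ?_⟩
  · rw [← hS, Submodule.span_le]
    intro s hs
    rw [SetLike.mem_coe, hN s]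
    refine Submodule.sum_mem _ fun d hd => Submodule.subset_span ?_
    have : (d, p d s) ∈ S' := by
      simp only [S', Finset.mem_biUnion, Finset.mem_image]
      exact ⟨s, hs, d, hd, rfl⟩
    exact ⟨S'.equivFin ⟨_, this⟩, by simp⟩
  · rw [Submodule.span_le]
    rintro _ ⟨i, rfl⟩
    exact (hS' _ (S'.equivFin.symm i).2).2

/-- The projection of the free module `R ^ l` onto its part of degree `d`, where the `i`-th basis
vector has degree `g i`. -/
def projPi (p : ℕ → R →+ R) {l : ℕ} (g : Fin l → ℕ) (d : ℕ) (f : Fin l → R) : Fin l → R :=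
  fun i => if g i ≤ d then p (d - g i) (f i) else 0

theorem projPi_add {l : ℕ} (g : Fin l → ℕ) (d : ℕ) (f f' : Fin l → R) :
    projPi p g d (f + f') = projPi p g d f + projPi p g d f' := by
  ext i
  simp only [projPi, Pi.add_apply]
  split_ifs <;> simp

theorem projPi_sum {l : ℕ} (g : Fin l → ℕ) (d : ℕ) {β : Type} (s : Finset β)
    (f : β → Fin l → R) :
    projPi p g d (∑ b ∈ s, f b) = ∑ b ∈ s, projPi p g d (f b) :=
  map_sum (⟨⟨projPi p g d, by ext i; simp [projPi]⟩, projPi_add g d⟩ : (Fin l → R) →+ (Fin l → R))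
    f s

theorem projPi_projPi (hp : GradedProj p) {l : ℕ} (g : Fin l → ℕ) (d : ℕ) (f : Fin l → R) :
    projPi p g d (projPi p g d f) = projPi p g d f := by
  ext i
  simp only [projPi]
  split_ifs <;> simp [hp.proj]

theorem exists_sum_projPi (hp : GradedProj p) {l : ℕ} (g : Fin l → ℕ) (f : Fin l → R) :
    ∃ N, f = ∑ d ∈ Finset.range N, projPi p g d f := by
  choose N hN using fun i => hp.exists_sum (f i)
  have hvan : ∀ i d, N i ≤ d → p d (f i) = 0 := by
    intro i d hd
    rw [hN i, map_sum]
    refine Finset.sum_eq_zero fun e he => ?_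
    rw [hp.proj, if_neg]
    have := Finset.mem_range.1 he
    omega
  refine ⟨Finset.univ.sup fun i => g i + N i, ?_⟩
  ext i
  have hle : g i + N i ≤ Finset.univ.sup fun i => g i + N i :=
    Finset.le_sup (f := fun i => g i + N i) (Finset.mem_univ i)
  rw [Finset.sum_apply]
  have hsub : (Finset.range (N i)).image (g i + ·) ⊆
      Finset.range (Finset.univ.sup fun i => g i + N i) := by
    intro d hd
    obtain ⟨e, he, rfl⟩ := Finset.mem_image.1 hd
    have := Finset.mem_range.1 he
    exact Finset.mem_range.2 (by omega)
  rw [← Finset.sum_subset hsub, Finset.sum_image (by intro a _ b _ h; simpa using h)]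
  · simpa [projPi] using hN i
  · intro d _ hd
    simp only [projPi]
    split_ifs with h
    · refine hvan _ _ ?_
      by_contra hlt
      exact hd (Finset.mem_image.2 ⟨d - g i, Finset.mem_range.2 (by omega), by omega⟩)
    · rfl

/-- Multiplication by a homogeneous scalar `u` of degree `e` shifts degrees by `e`. -/
theorem projPi_smul (hp : GradedProj p) {l : ℕ} (g : Fin l → ℕ) (d e : ℕ) (u : R) (hu : p e u = u)
    (f : Fin l → R) :
    projPi p g d (u • f) = if e ≤ d then u • projPi p g (d - e) f else 0 := by
  ext i
  simp only [projPi, Pi.smul_apply, smul_eq_mul]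
  have := fun d' => hp.mul_left d' e u (f i)
  simp only [hu] at this
  simp only [this]
  by_cases h1 : e ≤ d
  · by_cases h2 : g i ≤ d
    · by_cases h3 : e ≤ d - g i
      · have h4 : g i ≤ d - e := by omega
        have h5 : d - g i - e = d - e - g i := by omega
        simp [projPi, h1, h2, h3, h4, h5]
      · have h4 : ¬ g i ≤ d - e := by omega
        simp [projPi, h1, h2, h3, h4]
    · have h4 : ¬ g i ≤ d - e := by omega
      simp [projPi, h1, h2, h4]
  · have h3 : ¬ e ≤ d - g i := by omega
    simp [h1, h3]

/-- On the submodule generated by a homogeneous vector `f` of degree `e`, the projections act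
through those of the coefficient. -/
theorem projPi_smul_of_homogeneous (hp : GradedProj p) {l : ℕ} (g : Fin l → ℕ) (d e : ℕ) (b : R)
    (f : Fin l → R) (hf : projPi p g e f = f) :
    projPi p g d (b • f) = if e ≤ d then p (d - e) b • f else 0 := by
  ext i
  have hfi := congrFun hf i
  simp only [projPi] at hfi
  simp only [projPi, Pi.smul_apply, smul_eq_mul]
  by_cases h0 : g i ≤ e
  · rw [if_pos h0] at hfi
    have := fun d' => hp.mul_right d' (e - g i) b (f i)
    simp only [hfi] at this
    simp only [this]
    by_cases h1 : e ≤ d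
    · have h2 : g i ≤ d := by omega
      have h3 : e - g i ≤ d - g i := by omega
      have h4 : d - g i - (e - g i) = d - e := by omega
      simp [h1, h2, h3, h4]
    · by_cases h2 : g i ≤ d
      · have h3 : ¬ e - g i ≤ d - g i := by omega
        simp [h1, h3]
      · simp [h1, h2]
  · rw [if_neg h0] at hfi
    split_ifs <;> simp [← hfi]

/-- The module of left syzygies of the family `a`. -/
def syz {l : ℕ} (a : Fin l → R) : Submodule R (Fin l → R) :=
  LinearMap.ker (Fintype.linearCombination R a)

theorem mem_syz {l : ℕ} {a : Fin l → R} {f : Fin l → R} : f ∈ syz a ↔ ∑ i, f i * a i = 0 := by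
  simp [syz, Fintype.linearCombination_apply]

theorem projPi_mem_syz (hp : GradedProj p) {l : ℕ} {a : Fin l → R} {g : Fin l → ℕ}
    (ha : ∀ i, p (g i) (a i) = a i) (d : ℕ) {f : Fin l → R} (hf : f ∈ syz a) :
    projPi p g d f ∈ syz a := by
  rw [mem_syz] at hf ⊢
  have := congrArg (p d) hf
  rw [map_zero, map_sum] at this
  rw [← this]
  refine Finset.sum_congr rfl fun i _ => ?_
  have h := hp.mul_right d (g i) (f i) (a i)
  rw [ha] at h
  rw [h]
  simp only [projPi]
  split_ifs <;> simp

/-- If `ker ε` is free as a right ideal, with basis `u`, then a syzygy with entries in `ker ε` lies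
in `ker ε` times the module of syzygies. Writing each entry `f i` as `∑ α, u α * b i α`, the syzygy
equation becomes `∑ α, u α * (∑ i, b i α * a i) = 0`, so each vector `(b i α)_i` is a syzygy. -/
theorem exists_syz_decomp {C : Type} [Ring C] (ε : R →+* C)
    {ι : Type} {u : ι → R} (hli : LinearIndependent Rᵐᵒᵖ u)
    (hker : ∀ a, ε a = 0 → a ∈ Submodule.span Rᵐᵒᵖ (Set.range u))
    {l : ℕ} {a : Fin l → R} {f : Fin l → R} (hf : f ∈ syz a) (hεf : ∀ i, ε (f i) = 0) :
    ∃ (s : Finset ι) (κ : ι → Fin l → R), (∀ α, κ α ∈ syz a) ∧ f = ∑ α ∈ s, u α • κ α := by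
  classical
  have h : ∀ i, ∃ b : ι →₀ Rᵐᵒᵖ, Finsupp.linearCombination Rᵐᵒᵖ u b = f i := fun i =>
    (Finsupp.mem_span_range_iff_exists_finsupp).1 (hker _ (hεf i))
  choose b hb using h
  have hb' : ∀ i, ∑ α ∈ Finset.univ.biUnion (fun i => (b i).support), u α * (b i α).unop = f i := by
    intro i
    rw [← hb i, Finsupp.linearCombination_apply, Finsupp.sum]
    symm
    apply Finset.sum_subset
    · exact Finset.subset_biUnion_of_mem (fun i => (b i).support) (Finset.mem_univ i)
    · intro α _ h
      simp [Finsupp.notMem_support_iff.1 h]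
  refine ⟨Finset.univ.biUnion fun i => (b i).support, fun α i => (b i α).unop, ?_, ?_⟩
  · have hc : Finsupp.linearCombination Rᵐᵒᵖ u
        (∑ i, Finsupp.mapRange (fun c => MulOpposite.op (a i) * c) (by simp) (b i)) = 0 := by
      rw [map_sum]
      rw [mem_syz] at hf
      rw [← hf]
      refine Finset.sum_congr rfl fun i _ => ?_
      rw [← hb i, Finsupp.linearCombination_apply, Finsupp.linearCombination_apply,
        Finsupp.sum_mapRange_index (by simp), Finsupp.sum, Finsupp.sum, Finset.sum_mul]
      simp [mul_assoc]
    have hz := (linearIndependent_iff.1 hli) _ hc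
    intro α
    have := DFunLike.congr_fun hz α
    rw [Finsupp.finsetSum_apply] at this
    simp only [Finsupp.mapRange_apply, Finsupp.coe_zero, Pi.zero_apply] at this
    have := congrArg MulOpposite.unop this
    rw [mem_syz]
    simpa using this
  · ext i
    rw [Finset.sum_apply]
    simp only [Pi.smul_apply, smul_eq_mul]
    exact (hb' i).symm

/-- The module of syzygies of homogeneous elements is finitely generated: modulo `ker ε` it embeds in
a finite free module over the Noetherian ring `C`, and by `exists_syz_decomp` finitely many lifts
generate it modulo `ker ε` times itself. As `ker ε` is generated in positive degrees, induction on
the degree (graded Nakayama) finishes the argument. -/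
theorem syz_fg (hp : GradedProj p) {C : Type} [Ring C] [IsNoetherianRing C] (ε : R →+* C)
    (hε : Function.Surjective ε)
    {ι : Type} {u : ι → R} (hli : LinearIndependent Rᵐᵒᵖ u)
    (hker : ∀ a, ε a = 0 → a ∈ Submodule.span Rᵐᵒᵖ (Set.range u))
    (deg : ι → ℕ) (hdeg : ∀ α, 1 ≤ deg α) (hu : ∀ α, p (deg α) (u α) = u α)
    {l : ℕ} {a : Fin l → R} {g : Fin l → ℕ} (ha : ∀ i, p (g i) (a i) = a i) : (syz a).FG := by
  classical
  have : RingHomSurjective ε := ⟨hε⟩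
  let εl : (Fin l → R) →ₛₗ[ε] (Fin l → C) :=
    { toFun := fun f i => ε (f i)
      map_add' := fun f f' => by ext i; simp
      map_smul' := fun r f => by ext i; simp }
  obtain ⟨S, hS⟩ := IsNoetherian.noetherian ((syz a).map εl)
  have hlift : ∀ c ∈ S, ∃ f ∈ syz a, εl f = c := by
    intro c hc
    have : c ∈ (syz a).map εl := hS ▸ Submodule.subset_span hc
    simpa [Submodule.mem_map] using this
  -- `P` is generated by the homogeneous components of lifts of the finitely many generators.
  choose! L hL hεL using hlift
  choose N hN using hp.exists_sum_projPi g
  let G : Finset (ℕ × (Fin l → R)) :=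
    S.biUnion fun c => (Finset.range (N (L c))).image fun d => (d, projPi p g d (L c))
  have hG : ∀ t ∈ G, projPi p g t.1 t.2 = t.2 ∧ t.2 ∈ syz a := by
    intro t ht
    simp only [G, Finset.mem_biUnion, Finset.mem_image] at ht
    obtain ⟨c, hc, d, -, rfl⟩ := ht
    exact ⟨hp.projPi_projPi g d _, hp.projPi_mem_syz ha d (hL c hc)⟩
  let P : Submodule R (Fin l → R) := Submodule.span R (G.image Prod.snd : Finset (Fin l → R))
  have hGP : ∀ t ∈ G, t.2 ∈ P := fun t ht =>
    Submodule.subset_span (by simpa using ⟨t.1, ht⟩)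
  have hLP : ∀ c ∈ S, L c ∈ P := by
    intro c hc
    rw [hN (L c)]
    refine Submodule.sum_mem _ fun d hd => hGP (d, projPi p g d (L c)) ?_
    simp only [G, Finset.mem_biUnion, Finset.mem_image]
    exact ⟨c, hc, d, hd, rfl⟩
  have hPsyz : P ≤ syz a := by
    rw [Submodule.span_le]
    intro f hf
    simp only [Finset.coe_image, Set.mem_image, Finset.mem_coe] at hf
    obtain ⟨t, ht, rfl⟩ := hf
    exact (hG t ht).2
  have hPproj : ∀ f ∈ P, ∀ d, projPi p g d f ∈ P := by
    intro f hf d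
    induction hf using Submodule.span_induction generalizing d with
    | mem f hf => 
      simp only [Finset.coe_image, Set.mem_image, Finset.mem_coe] at hf
      obtain ⟨t, ht, rfl⟩ := hf
      have := hp.projPi_smul_of_homogeneous g d t.1 1 t.2 (hG t ht).1
      rw [one_smul] at this
      rw [this]
      split_ifs
      · exact P.smul_mem _ (hGP t ht)
      · exact P.zero_mem
    | zero => 
      have : projPi p g d 0 = 0 := by ext i; simp [projPi]
      rw [this]; exact P.zero_mem
    | add f f' _ _ h h' => rw [projPi_add]; exact P.add_mem (h d) (h' d)
    | smul b f _ h =>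
      obtain ⟨M, hM⟩ := hp.exists_sum_projPi g f
      rw [hM, Finset.smul_sum, projPi_sum]
      refine P.sum_mem fun e _ => ?_
      rw [hp.projPi_smul_of_homogeneous g d e b _ (hp.projPi_projPi g e f)]
      split_ifs
      · exact P.smul_mem _ (h e)
      · exact P.zero_mem
  have hmod : ∀ f ∈ syz a, ∃ f' ∈ P, ∀ i, ε (f i) = ε (f' i) := by
    intro f hf
    have h1 : εl f ∈ Submodule.span C (S : Set (Fin l → C)) := by
      rw [hS]; exact Submodule.mem_map_of_mem hf
    have h2 : Submodule.span C (S : Set (Fin l → C)) ≤ P.map εl := by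
      rw [Submodule.span_le]
      intro c hc
      exact ⟨L c, hLP c hc, hεL c hc⟩
    obtain ⟨f', hf', h⟩ := h2 h1
    exact ⟨f', hf', fun i => (congrFun h i).symm⟩
  have key : ∀ d, ∀ f ∈ syz a, projPi p g d f ∈ P := by
    intro d
    induction d using Nat.strong_induction_on with
    | _ d ih =>
      intro f hf
      obtain ⟨f', hf', h⟩ := hmod f hf
      obtain ⟨s, κ, hκ, hs⟩ := exists_syz_decomp ε hli hker
        ((syz a).sub_mem hf (hPsyz hf')) (fun i => by simp [h i])
      have : f = f' + ∑ α ∈ s, u α • κ α := by rw [← hs]; abel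
      rw [this, projPi_add, projPi_sum]
      refine P.add_mem (hPproj f' hf' d) (P.sum_mem fun α _ => ?_)
      rw [hp.projPi_smul g d (deg α) (u α) (hu α)]
      split_ifs
      · have := hdeg α
        exact P.smul_mem _ (ih _ (by omega) _ (hκ α))
      · exact P.zero_mem
  have : syz a = P := by
    refine le_antisymm (fun f hf => ?_) hPsyz
    rw [hN f]
    exact P.sum_mem fun d _ => key d f hf
  rw [this]
  exact ⟨_, rfl⟩

/-- If the kernel of a surjection from a graded ring onto a left Noetherian ring is free as a right
ideal, on homogeneous elements of positive degree, then the graded ring is left coherent. -/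
theorem finitePresentation (hp : GradedProj p) {C : Type} [Ring C] [IsNoetherianRing C]
    (ε : R →+* C) (hε : Function.Surjective ε)
    {ι : Type} {u : ι → R} (hli : LinearIndependent Rᵐᵒᵖ u)
    (hker : ∀ a, ε a = 0 → a ∈ Submodule.span Rᵐᵒᵖ (Set.range u))
    (deg : ι → ℕ) (hdeg : ∀ α, 1 ≤ deg α) (hu : ∀ α, p (deg α) (u α) = u α)
    (I : Ideal R) (hI : ∀ a ∈ I, ∀ i, p i a ∈ I) (hfg : I.FG) :
    Module.FinitePresentation R I := by
  obtain ⟨l, a, g, ha, rfl⟩ := hp.exists_homogeneous_generators I hI hfg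
  let F := Fintype.linearCombination R a
  have hF : LinearMap.range F = Submodule.span R (Set.range a) :=
    Fintype.range_linearCombination R a
  rw [← hF]
  refine Module.finitePresentation_of_surjective F.rangeRestrict F.surjective_rangeRestrict ?_
  rw [LinearMap.ker_rangeRestrict]
  exact hp.syz_fg ε hε hli hker deg hdeg hu ha

end GradedProj

/-! ### Ore data and the algebras they present -/

/-- The value at `Y` of the quadratic form `∑ s t, K i s t x_s ⊗ x_t`, that is, of `δ(x_i)`. -/
def quad {𝕜 I E : Type} [Field 𝕜] [Fintype I] [Ring E] [Algebra 𝕜 E] (K : I → I → I → 𝕜)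
    (Y : I → E) (i : I) : E :=
  ∑ s, ∑ t, K i s t • (Y s * Y t)

/-- The vector space with basis the pairs `(w, e)`, standing for the monomials `x_w z ^ e`. -/
abbrev Model (𝕜 I : Type) [Field 𝕜] := List I × ℕ →₀ 𝕜

/-- The evaluation `(w, e) ↦ X_w Z ^ e` of formal combinations of monomials. -/
def ev {𝕜 I : Type} [Field 𝕜] {R : Type} [Ring R] [Algebra 𝕜 R] (X : I → R) (Z : R) :
    Model 𝕜 I →ₗ[𝕜] R :=
  Finsupp.lift R 𝕜 (List I × ℕ) fun w => (w.1.map X).prod * Z ^ w.2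

theorem ev_single {𝕜 I : Type} [Field 𝕜] {R : Type} [Ring R] [Algebra 𝕜 R] (X : I → R)
    (Z : R) (w : List I) (e : ℕ) :
    ev X Z (Finsupp.single (w, e) (1 : 𝕜)) = (w.map X).prod * Z ^ e := by
  simp [ev]

/-- The data defining the Ore extension: the relation `∑ i, c i x_i x_{σ i} = 0`, with `σ` an
involution, and the structure constants `K` of the derivation. The distinguished index `j` satisfies
`σ j ≠ j` and `K i j j = 0`. The field `derivation_rel` says that `δ(r)` vanishes in the free algebra,
tested on every tuple of elements of every algebra. -/
structure OreData (𝕜 I : Type) [Field 𝕜] [Fintype I] where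
  σ : I → I
  invol : ∀ i, σ (σ i) = i
  c : I → 𝕜
  c_ne_zero : ∀ i, c i ≠ 0
  K : I → I → I → 𝕜
  j : I
  σj_ne : σ j ≠ j
  Kj : ∀ i, K i j j = 0
  derivation_rel : ∀ (E : Type) [Ring E] [Algebra 𝕜 E] (Y : I → E),
    ∑ i, c i • (quad K Y i * Y (σ i) + Y i * quad K Y (σ i)) = 0

namespace OreData

open MulOpposite

variable {𝕜 I : Type} [Field 𝕜] [Fintype I] (d : OreData 𝕜 I)

/-- The elements `Y i` and `W` satisfy the defining relations of the Ore extension. -/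
structure Rels {E : Type} [Ring E] [Algebra 𝕜 E] (Y : I → E) (W : E) : Prop where
  sum_eq_zero : ∑ i, d.c i • (Y i * Y (d.σ i)) = 0
  comm : ∀ i, W * Y i = Y i * W + quad d.K Y i

/-- `R` is presented by the generators `X i`, `Z` and the relations of `d`. Generation is stated as an
induction principle, which is symmetric under passing to the opposite ring. -/
structure Presents {R : Type} [Ring R] [Algebra 𝕜 R] (X : I → R) (Z : R) : Prop where
  rels : d.Rels X Z
  induct : ∀ P : R → Prop, (∀ r : 𝕜, P (algebraMap 𝕜 R r)) → (∀ a b, P a → P b → P (a + b)) →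
    (∀ a b, P a → P b → P (a * b)) → (∀ i, P (X i)) → P Z → ∀ a, P a
  lift : ∀ (E : Type) [Ring E] [Algebra 𝕜 E] (Y : I → E) (W : E), d.Rels Y W →
    ∃ φ : R →ₐ[𝕜] E, (∀ i, φ (X i) = Y i) ∧ φ Z = W

theorem quad_op {E : Type} [Ring E] [Algebra 𝕜 E] (Y : I → E) (K : I → I → I → 𝕜) (i : I) :
    quad (fun i s t => - K i t s) (fun i => op (Y i)) i = - op (quad K Y i) := by
  simp only [quad]
  rw [Finset.sum_comm]
  simp [Finset.op_sum]

theorem quad_op' {E : Type} [Ring E] [Algebra 𝕜 E] (Y : I → E) (K : I → I → I → 𝕜) (i : I) :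
    quad K (fun i => op (Y i)) i = - op (quad (fun i s t => - K i t s) Y i) := by
  simp only [quad]
  rw [Finset.sum_comm]
  simp [Finset.op_sum]

/-- The data presenting the opposite algebra. Reversing `z x_i - x_i z = δ(x_i)` changes the sign of
`δ` and transposes it. -/
@[simps]
def opp : OreData 𝕜 I where
  σ := d.σ
  invol := d.invol
  c := fun i => d.c (d.σ i)
  c_ne_zero := fun i => d.c_ne_zero _
  K := fun i s t => - d.K i t s
  j := d.j
  σj_ne := d.σj_ne
  Kj := by simp [d.Kj]
  derivation_rel := by
    intro E _ _ Y
    have h := d.derivation_rel Eᵐᵒᵖ (fun i => op (Y i))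
    simp only [quad_op'] at h
    have h2 := congrArg unop h
    simp only [Finset.unop_sum, unop_smul, unop_add, unop_mul, unop_neg, unop_op, unop_zero] at h2
    rw [← neg_eq_zero, ← h2, ← Finset.sum_neg_distrib]
    refine Fintype.sum_equiv ⟨d.σ, d.σ, d.invol, d.invol⟩ _ _ fun i => ?_
    simp only [Equiv.coe_fn_mk, d.invol, ← smul_neg]
    congr 1
    noncomm_ring

variable {d}

theorem Rels.opp {E : Type} [Ring E] [Algebra 𝕜 E] {Y : I → E} {W : E} (h : d.Rels Y W) :
    d.opp.Rels (fun i => op (Y i)) (op W) where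
  sum_eq_zero := by
    rw [← op_zero (α := E), ← h.sum_eq_zero, Finset.op_sum]
    refine Fintype.sum_equiv ⟨d.σ, d.σ, d.invol, d.invol⟩ _ _ fun i => ?_
    simp [d.invol]
  comm := by
    intro i
    change op W * op (Y i) = op (Y i) * op W +
      quad (fun i s t => -d.K i t s) (fun i => op (Y i)) i
    rw [quad_op, ← op_mul, ← op_mul, h.comm, op_add]
    abel

theorem Rels.of_opp {E : Type} [Ring E] [Algebra 𝕜 E] {Y : I → E} {W : E} (h : d.opp.Rels Y W) :
    d.Rels (fun i => op (Y i)) (op W) where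
  sum_eq_zero := by
    rw [← op_zero (α := E), ← h.sum_eq_zero, Finset.op_sum]
    refine Fintype.sum_equiv ⟨d.σ, d.σ, d.invol, d.invol⟩ _ _ fun i => ?_
    simp [d.invol]
  comm := by
    intro i
    have hc : W * Y i = Y i * W + quad (fun i s t => -d.K i t s) Y i := h.comm i
    rw [quad_op', ← op_mul, ← op_mul, hc, op_add]
    abel

theorem Presents.opp {R : Type} [Ring R] [Algebra 𝕜 R] {X : I → R} {Z : R} (h : d.Presents X Z) :
    d.opp.Presents (fun i => op (X i)) (op Z) where
  rels := h.rels.opp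
  induct := by
    intro P h1 h2 h3 h4 h5 a
    exact h.induct (fun b => P (op b)) h1 (fun a b ha hb => h2 _ _ ha hb)
      (fun a b ha hb => h3 _ _ hb ha) h4 h5 a.unop
  lift := by
    intro E _ _ Y W hY
    obtain ⟨φ, hφ, hφ'⟩ := h.lift Eᵐᵒᵖ _ _ hY.of_opp
    exact ⟨AlgHom.opComm φ, fun i => by simp [AlgHom.opComm, hφ], by simp [AlgHom.opComm, hφ']⟩

/-! ### Generators of the kernel of `B → 𝕜[x_j, z]` -/

section KernelGenerators
variable {R : Type} [Ring R] {X : I → R}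

variable (d) in
/-- Indices `(a, i)` of the elements `x_j ^ a x_i` with `i ≠ j` that are normal, that is, do not contain
the word `x_j x_{σ j}`, which the quadratic relation rewrites. -/
abbrev Idx : Type := {α : ℕ × I // α.2 ≠ d.j ∧ (α.2 = d.σ d.j → α.1 = 0)}

variable (d) in
/-- The element `x_j ^ a x_i`. Over the indices in `Idx` these form a basis, as a right module, of
the two-sided ideal generated by the `x_i` with `i ≠ j`. -/
def kerGen (X : I → R) (α : d.Idx) : R := X d.j ^ α.1.1 * X α.1.2

variable (d) in
/-- Prepend the word `x_j ^ a x_i` to a monomial. -/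
def prefixMap (α : d.Idx) (w : List I × ℕ) : List I × ℕ :=
  (List.replicate α.1.1 d.j ++ α.1.2 :: w.1, w.2)

/-- A word of the form `x_j ^ a x_i w` with `i ≠ j` determines `a`, `i` and `w`: look at its first letter
other than `x_j`. -/
theorem prefixMap_inj {α β : d.Idx} {v w : List I × ℕ} (h : d.prefixMap α v = d.prefixMap β w) :
    α = β ∧ v = w := by
  obtain ⟨⟨a, i⟩, hi, ha⟩ := α
  obtain ⟨⟨b, i'⟩, hi', hb⟩ := β
  obtain ⟨v, e⟩ := v
  obtain ⟨w, f⟩ := w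
  simp only [prefixMap, Prod.mk.injEq] at h
  obtain ⟨h, rfl⟩ := h
  simp only at hi hi'
  have key : ∀ a b : ℕ, List.replicate a d.j ++ i :: v = List.replicate b d.j ++ i' :: w →
      a = b ∧ i = i' ∧ v = w := by
    intro a
    induction a with
    | zero =>
      intro b h
      cases b with
      | zero => simpa using h
      | succ b => simp [List.replicate_succ, hi] at h
    | succ a ih =>
      intro b h
      cases b with
      | zero => simp [List.replicate_succ, hi'.symm] at h
      | succ b =>
        simp only [List.replicate_succ, List.cons_append, List.cons.injEq, true_and] at h
        have := ih b h
        exact ⟨by rw [this.1], this.2⟩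
  obtain ⟨rfl, rfl, rfl⟩ := key a b h
  exact ⟨rfl, rfl⟩

variable (d) in
/-- The right ideal generated by the elements `kerGen`. -/
def kerSpan (X : I → R) : Submodule Rᵐᵒᵖ R :=
  Submodule.span Rᵐᵒᵖ (Set.range (d.kerGen X))

theorem kerSpan_mul {a : R} (ha : a ∈ d.kerSpan X) (b : R) : a * b ∈ d.kerSpan X :=
  (d.kerSpan X).smul_mem (op b) ha

theorem kerSpan_smul [Algebra 𝕜 R] {a : R} (ha : a ∈ d.kerSpan X) (r : 𝕜) :
    r • a ∈ d.kerSpan X := by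
  rw [Algebra.smul_def, Algebra.commutes]
  exact kerSpan_mul ha _

end KernelGenerators

/-! ### A representation by rewriting of words -/

section Model
variable [DecidableEq I] {R : Type} [Ring R] [Algebra 𝕜 R]

/-- Prepend the letter `i` to the words. -/
def consL (𝕜 : Type) {I : Type} [Field 𝕜] (i : I) : Model 𝕜 I →ₗ[𝕜] Model 𝕜 I :=
  Finsupp.lmapDomain 𝕜 𝕜 fun w => (i :: w.1, w.2)

variable (d)

/-- Left multiplication of a monomial by `x_j`: the letter `j` is prepended, except that an initial
`x_j x_{σ j}` is rewritten as `-c_j⁻¹ ∑ i ≠ j, c_i x_i x_{σ i}`. The recursive call is the term with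
`σ i = j`. Words containing `x_j x_{σ j}` further inside are kept in the basis of `Model`; they do no
harm. -/
def jact : List I → ℕ → Model 𝕜 I
  | [], e => Finsupp.single ([d.j], e) 1
  | a :: w, e =>
    if a = d.σ d.j then
      -(d.c d.j)⁻¹ • ∑ i ∈ Finset.univ.erase d.j, d.c i •
        consL 𝕜 i (if d.σ i = d.j then jact w e else Finsupp.single (d.σ i :: w, e) 1)
    else Finsupp.single (d.j :: a :: w, e) 1

/-- The action of `x_i` on `Model`. -/
def T (i : I) : Module.End 𝕜 (Model 𝕜 I) :=
  if i = d.j then Finsupp.lift (Model 𝕜 I) 𝕜 (List I × ℕ) (fun w => d.jact w.1 w.2) else consL 𝕜 i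

theorem T_of_ne {i : I} (h : i ≠ d.j) (w : List I) (e : ℕ) :
    d.T i (Finsupp.single (w, e) 1) = Finsupp.single (i :: w, e) 1 := by
  simp [T, h, consL]

theorem T_j (w : List I) (e : ℕ) : d.T d.j (Finsupp.single (w, e) 1) = d.jact w e := by
  simp [T]

theorem T_j_nil (e : ℕ) : d.T d.j (Finsupp.single ([], e) 1) = Finsupp.single ([d.j], e) 1 := by
  simp [T_j, jact]

theorem T_j_cons {a : I} (h : a ≠ d.σ d.j) (w : List I) (e : ℕ) :
    d.T d.j (Finsupp.single (a :: w, e) 1) = Finsupp.single (d.j :: a :: w, e) 1 := by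
  simp [T_j, jact, h]

theorem T_j_cons_σ (w : List I) (e : ℕ) :
    d.T d.j (Finsupp.single (d.σ d.j :: w, e) 1) = -(d.c d.j)⁻¹ • ∑ i ∈ Finset.univ.erase d.j,
      d.c i • d.T i (d.T (d.σ i) (Finsupp.single (w, e) 1)) := by
  rw [T_j, jact, if_pos rfl]
  congr 1
  refine Finset.sum_congr rfl fun i hi => ?_
  have hi' : i ≠ d.j := Finset.ne_of_mem_erase hi
  congr 1
  rw [T, if_neg hi']
  congr 1
  split_ifs with h
  · rw [h, T_j]
  · rw [T_of_ne _ h]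

/-- The quadratic relation, solved for the term with index `j`. -/
theorem solve_rel {E : Type} [AddCommGroup E] [Module 𝕜 E] (f : I → E) :
    f d.j = -(d.c d.j)⁻¹ • ∑ i ∈ Finset.univ.erase d.j, d.c i • f i ↔ ∑ i, d.c i • f i = 0 := by
  rw [← Finset.add_sum_erase _ _ (Finset.mem_univ d.j)]
  have := d.c_ne_zero d.j
  constructor
  · intro h
    rw [h, smul_smul]
    simp [this]
  · intro h
    rw [← eq_neg_iff_add_eq_zero] at h
    rw [neg_smul, ← smul_neg, ← h, smul_smul, inv_mul_cancel₀ this, one_smul]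

theorem T_rel : ∑ i, d.c i • (d.T i * d.T (d.σ i)) = 0 := by
  rw [← d.solve_rel (fun i => d.T i * d.T (d.σ i))]
  refine Finsupp.lhom_ext' fun ⟨w, e⟩ => LinearMap.ext_ring ?_
  simp only [LinearMap.comp_apply, Finsupp.lsingle_apply, Module.End.mul_apply]
  rw [T_of_ne _ d.σj_ne, T_j_cons_σ]
  simp [LinearMap.sum_apply]

/-- Left multiplication of a monomial by `z`, moved to the right past each letter by means of
`z x_a = x_a z + δ(x_a)`. -/
def zact : List I → ℕ → Model 𝕜 I
  | [], e => Finsupp.single ([], e + 1) 1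
  | a :: w, e => d.T a (zact w e) + quad d.K d.T a (Finsupp.single (w, e) 1)

/-- The action of `z` on `Model`. -/
def Zop : Module.End 𝕜 (Model 𝕜 I) :=
  Finsupp.lift (Model 𝕜 I) 𝕜 (List I × ℕ) (fun w => d.zact w.1 w.2)

theorem Zop_nil (e : ℕ) : d.Zop (Finsupp.single ([], e) 1) = Finsupp.single ([], e + 1) 1 := by
  simp [Zop, zact]

theorem Zop_cons (a : I) (w : List I) (e : ℕ) : d.Zop (Finsupp.single (a :: w, e) 1) =
    d.T a (d.Zop (Finsupp.single (w, e) 1)) + quad d.K d.T a (Finsupp.single (w, e) 1) := by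
  simp [Zop, zact]

theorem Zop_T_of_ne {a : I} (h : a ≠ d.j) (v : Model 𝕜 I) :
    d.Zop (d.T a v) = d.T a (d.Zop v) + quad d.K d.T a v := by
  suffices d.Zop * d.T a = d.T a * d.Zop + quad d.K d.T a from LinearMap.congr_fun this v
  refine Finsupp.lhom_ext' fun ⟨w, e⟩ => LinearMap.ext_ring ?_
  simp only [LinearMap.comp_apply, Finsupp.lsingle_apply, Module.End.mul_apply,
    LinearMap.add_apply]
  rw [T_of_ne _ h, Zop_cons]

/-- The commutation relation of `z` with `x_j`. It is built into the definition of `Zop` unless the word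
starts with `σ j`; there both sides are rewritten with the quadratic relation, and they agree
because `δ(r) = 0`. -/
theorem Zop_T_j (w : List I) (e : ℕ) : d.Zop (d.T d.j (Finsupp.single (w, e) 1)) =
    d.T d.j (d.Zop (Finsupp.single (w, e) 1)) + quad d.K d.T d.j (Finsupp.single (w, e) 1) := by
  induction w with
  | nil => rw [T_j_nil, Zop_cons]
  | cons a w ih =>
    by_cases ha : a = d.σ d.j
    · subst ha
      set v : Model 𝕜 I := Finsupp.single (w, e) 1 with hv
      have hT : ∀ i, d.Zop (d.T i v) = d.T i (d.Zop v) + quad d.K d.T i v := by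
        intro i
        by_cases hi : i = d.j
        · rw [hi, ih]
        · exact d.Zop_T_of_ne hi v
      have hv' : Finsupp.single (d.σ d.j :: w, e) 1 = d.T (d.σ d.j) v := by
        rw [T_of_ne _ d.σj_ne]
      have h1 : ∀ u, ∑ i, d.c i • d.T i (d.T (d.σ i) u) = 0 := by
        intro u
        simpa [LinearMap.sum_apply] using LinearMap.congr_fun d.T_rel u
      have h2 : ∑ i, d.c i • (quad d.K d.T i (d.T (d.σ i) v) + d.T i (quad d.K d.T (d.σ i) v))
          = 0 := by
        simpa [LinearMap.sum_apply] using
          LinearMap.congr_fun (d.derivation_rel (Module.End 𝕜 (Model 𝕜 I)) d.T) v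
      rw [hv', (d.solve_rel (fun i => d.T i (d.T (d.σ i) v))).2 (h1 v), hT, map_add,
        (d.solve_rel (fun i => d.T i (d.T (d.σ i) (d.Zop v)))).2 (h1 _), add_assoc,
        add_comm (d.T d.j _),
        (d.solve_rel
          (fun i => quad d.K d.T i (d.T (d.σ i) v) + d.T i (quad d.K d.T (d.σ i) v))).2 h2,
        ← smul_add, ← Finset.sum_add_distrib, map_smul, map_sum]
      congr 1
      refine Finset.sum_congr rfl fun i hi => ?_
      rw [map_smul, d.Zop_T_of_ne (Finset.ne_of_mem_erase hi), hT, map_add, ← smul_add]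
      congr 1
      abel
    · rw [T_j_cons _ ha, Zop_cons]

theorem model_rels : d.Rels d.T d.Zop where
  sum_eq_zero := d.T_rel
  comm := by
    intro i
    refine Finsupp.lhom_ext' fun ⟨w, e⟩ => LinearMap.ext_ring ?_
    simp only [LinearMap.comp_apply, Finsupp.lsingle_apply, Module.End.mul_apply,
      LinearMap.add_apply]
    by_cases h : i = d.j
    · rw [h, Zop_T_j]
    · rw [Zop_T_of_ne _ h]

variable {d} {X : I → R} {Z : R}

theorem Rels.ev_T_of_ne {i : I} (hi : i ≠ d.j) (v : Model 𝕜 I) :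
    ev X Z (d.T i v) = X i * ev X Z v := by
  suffices ev X Z ∘ₗ d.T i = LinearMap.mulLeft 𝕜 (X i) ∘ₗ ev X Z from LinearMap.congr_fun this v
  refine Finsupp.lhom_ext' fun ⟨w, e⟩ => LinearMap.ext_ring ?_
  simp only [LinearMap.comp_apply, Finsupp.lsingle_apply, LinearMap.mulLeft_apply]
  rw [T_of_ne _ hi, ev_single, ev_single, List.map_cons, List.prod_cons, mul_assoc]

theorem Rels.ev_T_single (h : d.Rels X Z) (i : I) (w : List I) (e : ℕ) :
    ev X Z (d.T i (Finsupp.single (w, e) 1)) = X i * ev X Z (Finsupp.single (w, e) (1 : 𝕜)) := by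
  by_cases hi : i = d.j
  · subst hi
    induction w with
    | nil => rw [T_j_nil, ev_single, ev_single]; simp
    | cons a w ih =>
      by_cases ha : a = d.σ d.j
      · subst ha
        have h1 := (d.solve_rel (fun i => X i * X (d.σ i))).2 h.sum_eq_zero
        have hw : ∀ i, ev X Z (d.T i (Finsupp.single (w, e) 1)) =
            X i * ev X Z (Finsupp.single (w, e) (1 : 𝕜)) := by
          intro i
          by_cases hi : i = d.j
          · rw [hi, ih]
          · exact ev_T_of_ne hi _
        rw [T_j_cons_σ, ev_single, List.map_cons, List.prod_cons, mul_assoc, ← mul_assoc, h1,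
          map_smul, map_sum, smul_mul_assoc, Finset.sum_mul]
        congr 1
        refine Finset.sum_congr rfl fun i hi => ?_
        rw [map_smul, ev_T_of_ne (Finset.ne_of_mem_erase hi), hw, ev_single, smul_mul_assoc,
          mul_assoc]
      · rw [T_j_cons _ ha, ev_single, ev_single, List.map_cons, List.prod_cons, mul_assoc]
  · exact ev_T_of_ne hi _

theorem Rels.ev_T (h : d.Rels X Z) (i : I) (v : Model 𝕜 I) :
    ev X Z (d.T i v) = X i * ev X Z v := by
  suffices ev X Z ∘ₗ d.T i = LinearMap.mulLeft 𝕜 (X i) ∘ₗ ev X Z from LinearMap.congr_fun this v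
  exact Finsupp.lhom_ext' fun ⟨w, e⟩ => LinearMap.ext_ring (h.ev_T_single i w e)

theorem Rels.ev_quad (h : d.Rels X Z) (i : I) (v : Model 𝕜 I) :
    ev X Z (quad d.K d.T i v) = quad d.K X i * ev X Z v := by
  simp only [quad, LinearMap.sum_apply, LinearMap.smul_apply, map_sum, map_smul,
    Module.End.mul_apply, h.ev_T, Finset.sum_mul, smul_mul_assoc, mul_assoc]

theorem Rels.ev_Zop (h : d.Rels X Z) (v : Model 𝕜 I) : ev X Z (d.Zop v) = Z * ev X Z v := by
  suffices ev X Z ∘ₗ d.Zop = LinearMap.mulLeft 𝕜 Z ∘ₗ ev X Z from LinearMap.congr_fun this v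
  refine Finsupp.lhom_ext' fun ⟨w, e⟩ => LinearMap.ext_ring ?_
  simp only [LinearMap.comp_apply, Finsupp.lsingle_apply, LinearMap.mulLeft_apply]
  induction w with
  | nil => rw [Zop_nil, ev_single, ev_single]; simp [pow_succ']
  | cons a w ih =>
    rw [Zop_cons, map_add, h.ev_T, ih, h.ev_quad, ev_single, ev_single, List.map_cons,
      List.prod_cons, ← mul_assoc, ← add_mul, ← h.comm]
    simp only [mul_assoc]

/-- `R` acts on `Model`, and every element of `R` is recovered by evaluating its image of the empty
monomial. In particular, that image determines the element. -/
theorem Presents.exists_model (h : d.Presents X Z) : ∃ φ : R →ₐ[𝕜] Module.End 𝕜 (Model 𝕜 I),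
    (∀ i, φ (X i) = d.T i) ∧ φ Z = d.Zop ∧
    ∀ a, ev X Z (φ a (Finsupp.single ([], 0) 1)) = a := by
  obtain ⟨φ, h1, h2⟩ := h.lift _ _ _ d.model_rels
  refine ⟨φ, h1, h2, fun a => ?_⟩
  have : ∀ v, ev X Z (φ a v) = a * ev X Z v := by
    refine h.induct (fun a => ∀ v, ev X Z (φ a v) = a * ev X Z v) ?_ ?_ ?_ ?_ ?_ a
    · intro r v
      rw [AlgHom.commutes, Module.algebraMap_end_apply, map_smul, Algebra.smul_def]
    · intro a b ha hb v
      rw [map_add, LinearMap.add_apply, map_add, ha, hb, add_mul]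
    · intro a b ha hb v
      rw [map_mul, Module.End.mul_apply, ha, hb, mul_assoc]
    · intro i v
      rw [h1, h.rels.ev_T]
    · intro v
      rw [h2, h.rels.ev_Zop]
  rw [this, ev_single]
  simp

/-- The generators `x_j ^ a x_i` act on `Model` without any rewriting, by mere concatenation. -/
theorem T_kerGen (α : d.Idx) (v : Model 𝕜 I) :
    d.kerGen d.T α v = Finsupp.mapDomain (d.prefixMap α) v := by
  suffices d.kerGen d.T α = Finsupp.lmapDomain 𝕜 𝕜 (d.prefixMap α) from
    LinearMap.congr_fun this v
  refine Finsupp.lhom_ext' fun ⟨w, e⟩ => LinearMap.ext_ring ?_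
  obtain ⟨⟨a, i⟩, hi, ha⟩ := α
  simp only at hi ha
  simp only [LinearMap.comp_apply, Finsupp.lsingle_apply, kerGen, Module.End.mul_apply,
    Finsupp.lmapDomain_apply, Finsupp.mapDomain_single, prefixMap]
  rw [T_of_ne _ hi]
  have key : ∀ b, (b = 0 ∨ i ≠ d.σ d.j) → (d.T d.j ^ b) (Finsupp.single (i :: w, e) (1 : 𝕜)) =
      Finsupp.single (List.replicate b d.j ++ i :: w, e) 1 := by
    intro b hb
    induction b with
    | zero => simp
    | succ b ih =>
      have hi' : i ≠ d.σ d.j := by simpa using hb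
      rw [pow_succ', Module.End.mul_apply, ih (Or.inr hi')]
      cases b with
      | zero => simp [T_j_cons _ hi']
      | succ b => simp [List.replicate_succ, T_j_cons _ d.σj_ne.symm]
  refine key a ?_
  by_cases h : i = d.σ d.j
  · exact Or.inl (ha h)
  · exact Or.inr h

/-- The elements `x_j ^ a x_i` are right linearly independent: in a relation `∑ α, u_α b_α = 0`, the images
of the summands in `Model` have pairwise disjoint supports. -/
theorem Presents.linearIndependent (h : d.Presents X Z) :
    LinearIndependent Rᵐᵒᵖ (d.kerGen X) := by
  obtain ⟨φ, h1, h2, h3⟩ := h.exists_model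
  rw [linearIndependent_iff]
  intro b hb
  have hφ : ∀ α, φ (d.kerGen X α) = d.kerGen d.T α := by
    intro α; simp [kerGen, h1]
  have h4 := congrArg (fun a => φ a (Finsupp.single ([], 0) 1)) hb
  simp only [Finsupp.linearCombination_apply, Finsupp.sum, map_sum, LinearMap.sum_apply,
    MulOpposite.smul_eq_mul_unop, map_mul, Module.End.mul_apply, hφ, T_kerGen, map_zero,
    LinearMap.zero_apply] at h4
  ext α
  rw [Finsupp.zero_apply, ← unop_eq_zero_iff, ← h3 (unop (b α))]
  by_cases hα : α ∈ b.support
  · have h5 : φ (unop (b α)) (Finsupp.single ([], 0) 1) = 0 := by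
      ext w
      have h6 := DFunLike.congr_fun h4 (d.prefixMap α w)
      rw [Finsupp.finsetSum_apply, Finset.sum_eq_single α,
        Finsupp.mapDomain_apply (fun v w hvw => (prefixMap_inj hvw).2)] at h6
      · simpa using h6
      · intro β _ hβ
        refine Finsupp.mapDomain_of_notMem_range _ _ ?_
        rintro ⟨v, hv⟩
        exact hβ (prefixMap_inj hv).1
      · exact fun hn => absurd hα hn
    rw [h5, map_zero]
  · rw [Finsupp.notMem_support_iff.1 hα]; simp

/-- The non-normal elements `x_j ^ (a + 1) x_{σ j}` lie in the right ideal `kerSpan` too, by rewriting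
`x_j x_{σ j}` and induction on `a`. -/
theorem Rels.pow_mul_mem (h : d.Rels X Z) (a : ℕ) :
    ∀ i, i ≠ d.j → X d.j ^ a * X i ∈ d.kerSpan X := by
  induction a with
  | zero => exact fun i hi => Submodule.subset_span ⟨⟨(0, i), hi, fun _ => rfl⟩, rfl⟩
  | succ a ih =>
    intro i hi
    by_cases his : i = d.σ d.j
    · subst his
      rw [pow_succ, mul_assoc, (d.solve_rel (fun i => X i * X (d.σ i))).2 h.sum_eq_zero,
        mul_smul_comm, Finset.mul_sum]
      refine kerSpan_smul (Submodule.sum_mem _ fun i hi => ?_) _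
      rw [mul_smul_comm, ← mul_assoc]
      exact kerSpan_smul (kerSpan_mul (ih i (Finset.ne_of_mem_erase hi)) _) _
    · exact Submodule.subset_span ⟨⟨(a + 1, i), hi, fun h => absurd h his⟩, rfl⟩

/-- A word is either a power of `x_j`, or contains another letter and lies in `kerSpan`, even after
multiplication by a power of `x_j` on the left. -/
theorem Rels.word_mem (h : d.Rels X Z) (w : List I) :
    (∃ b, w = List.replicate b d.j) ∨
      ((∃ i ∈ w, i ≠ d.j) ∧ ∀ a, X d.j ^ a * (w.map X).prod ∈ d.kerSpan X) := by
  induction w with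
  | nil => exact Or.inl ⟨0, rfl⟩
  | cons i w ih =>
    by_cases hi : i = d.j
    · subst hi
      rcases ih with ⟨b, rfl⟩ | ⟨⟨i, hi, hi'⟩, ih⟩
      · exact Or.inl ⟨b + 1, rfl⟩
      · refine Or.inr ⟨⟨i, List.mem_cons_of_mem _ hi, hi'⟩, fun a => ?_⟩
        rw [List.map_cons, List.prod_cons, ← mul_assoc, ← pow_succ]
        exact ih _
    · refine Or.inr ⟨⟨i, by simp, hi⟩, fun a => ?_⟩
      rw [List.map_cons, List.prod_cons, ← mul_assoc]
      exact kerSpan_mul (h.pow_mul_mem a i hi) _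

/-- The quotient of `R` by the `x_i` with `i ≠ j` is `𝕜[x_j, z]`, and the kernel is contained in the right ideal
`kerSpan`. The map exists because `σ j ≠ j` and `K i j j = 0`. -/
theorem Presents.exists_quotient (h : d.Presents X Z) :
    ∃ ε : R →ₐ[𝕜] MvPolynomial (Fin 2) 𝕜, Function.Surjective ε ∧
      ∀ a, ε a = 0 → a ∈ Submodule.span Rᵐᵒᵖ (Set.range (d.kerGen X)) := by
  let Y : I → MvPolynomial (Fin 2) 𝕜 := fun i => if i = d.j then MvPolynomial.X 0 else 0
  have hYj : Y d.j = MvPolynomial.X 0 := by simp [Y]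
  have hY0 : ∀ i, i ≠ d.j → Y i = 0 := fun i hi => by simp [Y, hi]
  obtain ⟨ε, hX, hZ⟩ := h.lift (MvPolynomial (Fin 2) 𝕜) Y (MvPolynomial.X 1)
    { sum_eq_zero := by
        refine Finset.sum_eq_zero fun i _ => ?_
        by_cases hi : i = d.j
        · rw [hi, hY0 _ d.σj_ne]; simp
        · rw [hY0 _ hi]; simp
      comm := by
        intro i
        have : quad d.K Y i = 0 := by
          refine Finset.sum_eq_zero fun s _ => Finset.sum_eq_zero fun t _ => ?_
          by_cases hs : s = d.j
          · by_cases ht : t = d.j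
            · rw [hs, ht, d.Kj, zero_smul]
            · rw [hY0 _ ht]; simp
          · rw [hY0 _ hs]; simp
        rw [this, add_zero, mul_comm] }
  refine ⟨ε, ?_, ?_⟩
  · rw [← AlgHom.range_eq_top, eq_top_iff, ← MvPolynomial.adjoin_range_X, Algebra.adjoin_le_iff]
    rintro _ ⟨i, rfl⟩
    fin_cases i
    · exact ⟨X d.j, by simp [hX, hYj]⟩
    · exact ⟨Z, by simp [hZ]⟩
  · intro a ha
    -- `s` is the linear section `x_j ^ b z ^ e ↦ X_j ^ b Z ^ e` of `ε`; every `a` satisfies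
    -- `a - s (ε a) ∈ kerSpan`.
    let s : MvPolynomial (Fin 2) 𝕜 →ₗ[𝕜] R :=
      (MvPolynomial.basisMonomials (Fin 2) 𝕜).constr 𝕜 fun m => X d.j ^ m 0 * Z ^ m 1
    have hs : ∀ b e : ℕ, s (MvPolynomial.X 0 ^ b * MvPolynomial.X 1 ^ e) = X d.j ^ b * Z ^ e := by
      intro b e
      have : (MvPolynomial.X 0 ^ b * MvPolynomial.X 1 ^ e : MvPolynomial (Fin 2) 𝕜) =
          MvPolynomial.basisMonomials (Fin 2) 𝕜
            (Finsupp.single 0 b + Finsupp.single 1 e) := by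
        simp [MvPolynomial.X_pow_eq_monomial, MvPolynomial.monomial_mul]
      rw [this, Module.Basis.constr_basis]
      simp
    obtain ⟨φ, -, -, h3⟩ := h.exists_model
    have key : ∀ v : Model 𝕜 I, ev X Z v - s (ε (ev X Z v)) ∈ d.kerSpan X := by
      intro v
      induction v using Finsupp.induction_linear with
      | zero => simp
      | add v w hv hw =>
        have := (d.kerSpan X).add_mem hv hw
        rw [map_add, map_add, map_add]
        convert this using 1
        abel
      | single we r =>
        obtain ⟨w, e⟩ := we
        rw [← mul_one r, ← smul_eq_mul, ← Finsupp.smul_single, map_smul, map_smul, map_smul,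
          ← smul_sub]
        refine kerSpan_smul ?_ r
        rw [ev_single]
        rcases h.rels.word_mem w with ⟨b, rfl⟩ | ⟨⟨i, hi, hi'⟩, hw⟩
        · simp [hX, hYj, hZ, hs]
        · have h0 : ε ((w.map X).prod * Z ^ e) = 0 := by
            rw [map_mul, map_list_prod, List.prod_eq_zero, zero_mul]
            simp only [List.map_map, List.mem_map]
            exact ⟨i, hi, by simp [hX, hY0 i hi']⟩
          rw [h0, map_zero, sub_zero]
          refine kerSpan_mul ?_ _
          simpa using hw 0
    have := key (φ a (Finsupp.single ([], 0) 1))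
    rw [h3, ha, map_zero, sub_zero] at this
    exact this

theorem Presents.finitePresentation (h : d.Presents X Z) {p : ℕ → R →+ R} (hp : GradedProj p)
    (hX : ∀ i, p 1 (X i) = X i) (J : Ideal R) (hJ : ∀ a ∈ J, ∀ i, p i a ∈ J) (hfg : J.FG) :
    Module.FinitePresentation R J := by
  obtain ⟨ε, hε, hker⟩ := h.exists_quotient
  refine hp.finitePresentation (ε : R →+* MvPolynomial (Fin 2) 𝕜) hε h.linearIndependent hker
    (fun α => α.1.1 + 1) (fun α => by omega) ?_ J hJ hfg
  rintro ⟨⟨a, i⟩, hi, ha⟩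
  simp only at hi
  simp only [kerGen]
  clear ha hi
  induction a with
  | zero => simp [hX]
  | succ a ih =>
    have := hp.mul_left (a + 1 + 1) 1 (X d.j) (X d.j ^ a * X i)
    rw [hX] at this
    rw [pow_succ', mul_assoc, this, if_pos (by omega), Nat.add_sub_cancel, ih]

end Model
end OreData

/-! ### Passage to the opposite ring -/

theorem gradedProj_decompose {𝕜 R : Type} [Field 𝕜] [Ring R] [Algebra 𝕜 R]
    (ℬ : ℕ → Submodule 𝕜 R) [GradedAlgebra ℬ] (p : ℕ → R →+ R)
    (hp : ∀ d a, p d a = DirectSum.decompose ℬ a d) : GradedProj p where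
  exists_sum a := by
    classical
    refine ⟨(DirectSum.decompose ℬ a).support.sup id + 1, ?_⟩
    conv_lhs => rw [← DirectSum.sum_support_decompose ℬ a]
    simp only [hp]
    refine Finset.sum_subset (fun d hd => ?_) fun d _ hd => ?_
    · have : id d ≤ (DirectSum.decompose ℬ a).support.sup id := Finset.le_sup hd
      simp only [id] at this
      exact Finset.mem_range.2 (by omega)
    · simpa using hd
  proj d e a := by
    rw [hp, hp]
    split_ifs with h
    · subst h; simp
    · exact DirectSum.decompose_of_mem_ne ℬ (SetLike.coe_mem _) (Ne.symm h)
  mul_right d e a b := by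
    rw [hp, hp, hp]
    split_ifs with h
    · exact DirectSum.coe_decompose_mul_of_right_mem_of_le ℬ (SetLike.coe_mem _) h
    · exact DirectSum.coe_decompose_mul_of_right_mem_of_not_le ℬ (SetLike.coe_mem _) h
  mul_left d e a b := by
    rw [hp, hp, hp]
    split_ifs with h
    · exact DirectSum.coe_decompose_mul_of_left_mem_of_le ℬ (SetLike.coe_mem _) h
    · exact DirectSum.coe_decompose_mul_of_left_mem_of_not_le ℬ (SetLike.coe_mem _) h

/-- The projections of the opposite grading. -/
def opProj {R : Type} [Ring R] (p : ℕ → R →+ R) (d : ℕ) : Rᵐᵒᵖ →+ Rᵐᵒᵖ := AddMonoidHom.mulOp (p d)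

theorem GradedProj.op {R : Type} [Ring R] {p : ℕ → R →+ R} (hp : GradedProj p) :
    GradedProj (opProj p) where
  exists_sum a := by
    obtain ⟨N, hN⟩ := hp.exists_sum a.unop
    refine ⟨N, MulOpposite.unop_injective ?_⟩
    rw [Finset.unop_sum]
    exact hN
  proj d e a := by
    refine MulOpposite.unop_injective ?_
    rw [apply_ite MulOpposite.unop]
    exact hp.proj d e a.unop
  mul_right d e a b := by
    refine MulOpposite.unop_injective ?_
    rw [apply_ite MulOpposite.unop]
    exact hp.mul_left d e b.unop a.unop
  mul_left d e a b := by
    refine MulOpposite.unop_injective ?_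
    rw [apply_ite MulOpposite.unop]
    exact hp.mul_right d e b.unop a.unop

/-- The regular right module of `R`, as the regular left module of `Rᵐᵒᵖ`. -/
def opSelfEquiv (R : Type) [Ring R] : R ≃ₗ[Rᵐᵒᵖ] Rᵐᵒᵖ :=
  { MulOpposite.opAddEquiv with
    map_smul' := fun _ _ => rfl }

theorem OreData.Presents.finitePresentation_right {𝕜 I R : Type} [Field 𝕜] [Fintype I]
    [DecidableEq I] [Ring R] [Algebra 𝕜 R] {d : OreData 𝕜 I} {X : I → R} {Z : R}
    (h : d.Presents X Z) {p : ℕ → R →+ R} (hp : GradedProj p)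
    (hX : ∀ i, p 1 (X i) = X i) (J : Submodule Rᵐᵒᵖ R) (hJ : ∀ a ∈ J, ∀ i, p i a ∈ J)
    (hfg : J.FG) : Module.FinitePresentation Rᵐᵒᵖ J := by
  let E := opSelfEquiv R
  have := h.opp.finitePresentation hp.op (fun i => congrArg MulOpposite.op (hX i))
    (J.map (E : R →ₗ[Rᵐᵒᵖ] Rᵐᵒᵖ)) ?_ (hfg.map _)
  · exact Module.FinitePresentation.of_equiv (E.submoduleMap J).symm
  · rintro _ ⟨a, ha, rfl⟩ i
    exact ⟨p i a, hJ a ha i, rfl⟩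

/-! ### The algebra `B` -/

section Glue
variable {k n M δ₀}

/-- The quadratic form of the standard matrix pairs each index `i` with `Fin.rev i`. -/
theorem sum_Mstd {m : ℕ} (hn : n = 2 * m) {E : Type} [AddCommGroup E] [Module k E]
    (f : Fin n → Fin n → E) :
    ∑ i, ∑ j, Mstd k n m hn i j • f i j =
      ∑ i : Fin n, (if (i : ℕ) < m then 1 else -1 : k) • f i (Fin.rev i) := by
  refine Finset.sum_congr rfl fun i _ => ?_
  rw [Finset.sum_eq_single (Fin.rev i)]
  · have : (i : ℕ) + (Fin.rev i : ℕ) + 1 = n := by rw [Fin.val_rev]; omega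
    rw [Mstd, if_pos this]
  · intro j _ hj
    have : ¬ (i : ℕ) + (j : ℕ) + 1 = n := fun h => hj (Fin.ext (by rw [Fin.val_rev]; omega))
    rw [Mstd, if_neg this, zero_smul]
  · simp

theorem embV_eq {K : Fin n → Fin n → Fin n → k}
    (hK : ∀ i, δ₀ (x k n i) = ∑ s : Fin n, ∑ t : Fin n, K i s t • (x k n s ⊗ₜ x k n t))
    (i : Fin n) :
    embV k n (δ₀ (x k n i)) = quad K (fun i => TensorAlgebra.ι k (x k n i)) i := by
  simp [hK, embV, quad]

theorem emb2_eq {K : Fin n → Fin n → Fin n → k}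
    (hK : ∀ i, δ₀ (x k n i) = ∑ s : Fin n, ∑ t : Fin n, K i s t • (x k n s ⊗ₜ x k n t))
    (i : Fin n) :
    emb2 k n (TensorProduct.map (inc k n) (inc k n) (δ₀ (x k n i))) =
      quad K (fun i => TensorAlgebra.ι k (inc k n (x k n i))) i := by
  simp [hK, emb2, quad]

theorem map_quad {I E E' : Type} [Fintype I] [Ring E] [Algebra k E] [Ring E'] [Algebra k E']
    (f : E →ₐ[k] E') (K : I → I → I → k) (Y : I → E) (i : I) :
    f (quad K Y i) = quad K (fun i => f (Y i)) i := by
  simp [quad]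

theorem lift_x {E : Type} [Ring E] [Algebra k E] (Y : Fin n → E) (i : Fin n) :
    Fintype.linearCombination k Y (x k n i) = Y i := by
  simp [x, Fintype.linearCombination_apply, Pi.single_apply]

variable (k n) in
/-- The Ore data of `B` for the standard matrix. -/
def stdData (m : ℕ) (hn : n = 2 * m)
    (δ : TensorAlgebra k (Fin n → k) →ₗ[k] TensorAlgebra k (Fin n → k))
    (hLeib : ∀ a b, δ (a * b) = δ a * b + a * δ b)
    (hδι : ∀ v : Fin n → k, δ (TensorAlgebra.ι k v) = embV k n (δ₀ v))
    (hδr : δ (rTV k n (Mstd k n m hn)) = 0)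
    (K : Fin n → Fin n → Fin n → k)
    (hK : ∀ i, δ₀ (x k n i) = ∑ s : Fin n, ∑ t : Fin n, K i s t • (x k n s ⊗ₜ x k n t))
    (j : Fin n) (hj : ∀ i : Fin n, K i j j = 0) : OreData k (Fin n) where
  σ := Fin.rev
  invol := Fin.rev_rev
  c := fun i => if (i : ℕ) < m then 1 else -1
  c_ne_zero := fun i => by split_ifs <;> simp
  K := K
  j := j
  σj_ne := by
    intro h
    have := congrArg Fin.val h
    rw [Fin.val_rev] at this
    omega
  Kj := hj
  derivation_rel := by
    intro E _ _ Y
    have h := congrArg (TensorAlgebra.lift k (Fintype.linearCombination k Y)) hδr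
    rw [rTV, sum_Mstd hn] at h
    simpa only [map_sum, map_smul, hLeib, hδι, embV_eq hK, map_add, map_mul, map_quad,
      TensorAlgebra.lift_ι_apply, lift_x, map_zero] using h

theorem B_presents (m : ℕ) (hn : n = 2 * m)
    (δ : TensorAlgebra k (Fin n → k) →ₗ[k] TensorAlgebra k (Fin n → k))
    (hLeib : ∀ a b, δ (a * b) = δ a * b + a * δ b)
    (hδι : ∀ v : Fin n → k, δ (TensorAlgebra.ι k v) = embV k n (δ₀ v))
    (hδr : δ (rTV k n (Mstd k n m hn)) = 0)
    (K : Fin n → Fin n → Fin n → k)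
    (hK : ∀ i, δ₀ (x k n i) = ∑ s : Fin n, ∑ t : Fin n, K i s t • (x k n s ⊗ₜ x k n t))
    (j : Fin n) (hj : ∀ i : Fin n, K i j j = 0) :
    (stdData k n m hn δ hLeib hδι hδr K hK j hj).Presents
      (fun i => πB k n (Mstd k n m hn) δ₀ (TensorAlgebra.ι k (inc k n (x k n i))))
      (πB k n (Mstd k n m hn) δ₀ (TensorAlgebra.ι k (zv k n))) where
  rels :=
    { sum_eq_zero := by
        have h : πB k n (Mstd k n m hn) δ₀ (rhat k n (Mstd k n m hn)) = 0 := by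
          rw [πB, RingQuot.mkAlgHom_rel k
            (show OreRel k n (Mstd k n m hn) δ₀ _ 0 from ⟨Or.inl rfl, rfl⟩), map_zero]
        rw [rhat, sum_Mstd hn] at h
        simp only [map_sum, map_smul, map_mul] at h
        exact h
      comm := by
        intro i
        have h : πB k n (Mstd k n m hn) δ₀ (relz k n δ₀ i) = 0 := by
          rw [πB, RingQuot.mkAlgHom_rel k
            (show OreRel k n (Mstd k n m hn) δ₀ _ 0 from ⟨Or.inr ⟨i, rfl⟩, rfl⟩), map_zero]
        rw [relz, emb2_eq hK, map_sub, map_sub, map_mul, map_mul, map_quad, sub_sub,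
          sub_eq_zero] at h
        exact h }
  induct := by
    intro P h1 h2 h3 h4 h5 a
    obtain ⟨a, rfl⟩ := RingQuot.mkAlgHom_surjective k (OreRel k n (Mstd k n m hn) δ₀) a
    have hsmul : ∀ (r : k) (b : B k n (Mstd k n m hn) δ₀), P b → P (r • b) := by
      intro r b hb
      rw [Algebra.smul_def]
      exact h3 _ _ (h1 r) hb
    have h0 : P 0 := by simpa using h1 0
    induction a using TensorAlgebra.induction with
    | algebraMap r => rw [AlgHom.commutes]; exact h1 r
    | ι v =>
      have hv : v = ∑ i, v.1 i • inc k n (x k n i) + v.2 • zv k n := by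
        refine Prod.ext ?_ ?_
        · ext t
          simp [inc, zv, x, Prod.fst_sum, Finset.sum_apply, Pi.single_apply]
        · simp [inc, zv, Prod.snd_sum]
      rw [hv, map_add, map_add, map_smul, map_smul, map_sum, map_sum]
      refine h2 _ _ ?_ (hsmul _ _ h5)
      refine Finset.sum_induction _ P h2 h0 fun i _ => ?_
      rw [map_smul, map_smul]
      exact hsmul _ _ (h4 i)
    | mul a b ha hb => rw [map_mul]; exact h3 _ _ ha hb
    | add a b ha hb => rw [map_add]; exact h2 _ _ ha hb
  lift := by
    intro E _ _ Y W h
    let f : Vhat k n →ₗ[k] E :=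
      (Fintype.linearCombination k Y).coprod (LinearMap.toSpanSingleton k E W)
    have hx : ∀ i, f (inc k n (x k n i)) = Y i := by
      intro i
      simp only [f, inc, LinearMap.coe_inl, LinearMap.coprod_apply, lift_x, map_zero, add_zero]
    have hz : f (zv k n) = W := by
      simp [f, zv]
    have hrel : ∀ ⦃a b : TensorAlgebra k (Vhat k n)⦄, OreRel k n (Mstd k n m hn) δ₀ a b →
        TensorAlgebra.lift k f a = TensorAlgebra.lift k f b := by
      rintro a b ⟨rfl | ⟨i, rfl⟩, rfl⟩
      · rw [rhat, sum_Mstd hn]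
        simp only [map_sum, map_smul, map_mul, TensorAlgebra.lift_ι_apply, hx, map_zero]
        exact h.sum_eq_zero
      · rw [relz, emb2_eq hK]
        simp only [map_sub, map_mul, map_quad, TensorAlgebra.lift_ι_apply, hx, hz, map_zero]
        rw [sub_sub, sub_eq_zero]
        exact h.comm i
    refine ⟨RingQuot.liftAlgHom k ⟨TensorAlgebra.lift k f, hrel⟩, fun i => ?_, ?_⟩
    · rw [πB, RingQuot.liftAlgHom_mkAlgHom_apply, TensorAlgebra.lift_ι_apply, hx]
    · rw [πB, RingQuot.liftAlgHom_mkAlgHom_apply, TensorAlgebra.lift_ι_apply, hz]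

end Glue

theorem ore_extension_graded_coherent
    (m : ℕ) (hm : 1 ≤ m) (hn : n = 2 * m)
    (hM : M = Mstd k n m hn)
    (δ : TensorAlgebra k (Fin n → k) →ₗ[k] TensorAlgebra k (Fin n → k))
    (hLeib : ∀ a b, δ (a * b) = δ a * b + a * δ b)
    (hδι : ∀ v : Fin n → k, δ (TensorAlgebra.ι k v) = embV k n (δ₀ v))
    (hδr : δ (rTV k n M) = 0)
    (K : Fin n → Fin n → Fin n → k)
    (hK : ∀ i, δ₀ (x k n i) = ∑ s : Fin n, ∑ t : Fin n, K i s t • (x k n s ⊗ₜ x k n t))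
    (hj : ∃ j : Fin n, ∀ i : Fin n, K i j j = 0)
    -- the grading on B induced from the standard grading of T(V̂)
    (ℬ : ℕ → Submodule k (B k n M δ₀)) [GradedAlgebra ℬ]
    (hℬ : ∀ i : ℕ, ℬ i = Submodule.map (πB k n M δ₀).toLinearMap
      ((LinearMap.range (TensorAlgebra.ι k : Vhat k n →ₗ[k] TensorAlgebra k (Vhat k n))) ^ i)) :
    -- graded left coherence
    (∀ I : Ideal (B k n M δ₀),
      (∀ a ∈ I, ∀ i : ℕ, (DirectSum.decompose ℬ a i : B k n M δ₀) ∈ I) →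
      I.FG → Module.FinitePresentation (B k n M δ₀) I)
    -- graded right coherence
    ∧ (∀ J : Submodule (B k n M δ₀)ᵐᵒᵖ (B k n M δ₀),
      (∀ a ∈ J, ∀ i : ℕ, (DirectSum.decompose ℬ a i : B k n M δ₀) ∈ J) →
      J.FG → Module.FinitePresentation (B k n M δ₀)ᵐᵒᵖ J) := by
  subst hM
  obtain ⟨j, hj⟩ := hj
  have hB := B_presents m hn δ hLeib hδι hδr K hK j hj
  let p : ℕ → B k n (Mstd k n m hn) δ₀ →+ B k n (Mstd k n m hn) δ₀ := fun d =>
    { toFun := fun a => (DirectSum.decompose ℬ a d : B k n (Mstd k n m hn) δ₀)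
      map_zero' := by simp
      map_add' := by simp }
  have hp : GradedProj p := gradedProj_decompose ℬ p fun _ _ => rfl
  have hX : ∀ i, p 1 (πB k n (Mstd k n m hn) δ₀ (TensorAlgebra.ι k (inc k n (x k n i)))) =
      πB k n (Mstd k n m hn) δ₀ (TensorAlgebra.ι k (inc k n (x k n i))) := by
    intro i
    refine DirectSum.decompose_of_mem_same ℬ ?_
    rw [hℬ 1, pow_one]
    exact ⟨_, ⟨_, rfl⟩, rfl⟩
  exact ⟨fun I hI hfg => hB.finitePresentation hp hX I hI hfg,
    fun J hJ hfg => hB.finitePresentation_right hp hX J hJ hfg⟩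

end
end

section
/- The polynomial extension A[z] — i.e. T(V⊕kz)/⟨r, z⊗x_i − x_i⊗z (i = 1,…,n)⟩, with z central of degree 1 — is a graded coherent algebra. (By Zhang's classification, the algebras A = T(V)/⟨r⟩ with M invertible anti-symmetric are exactly the connected graded 2-Calabi-Yau algebras, so this says: A[z] is graded coherent for every connected graded 2-Calabi-Yau algebra A.) -/
/-!
Write `R` for `A[z]`, with generators `X_i`, `z`. Left coherence is proved for every algebra with
this presentation (`Pres`); since `M` is antisymmetric, the opposite algebra has the same
presentation (`Pres.op`), and right coherence follows.

If `n ≤ 1`, then `R` is a finitely generated commutative algebra, hence Noetherian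
(`Pres.noeth_small`).

Let `n ≥ 2`. The point is that, after extending scalars to an algebraic closure `L`, the algebra
`R' = L ⊗ R` has a two-sided ideal `E` which is free as a *right* module, on a family `e_t` lying in
the left ideal generated by the `X_i`, and with `R' / E` left Noetherian (`Pres.key`). To find it,
choose an isotropic vector `p` (`pᵀ M p = 0`) with `p_{i₀} = 1` (`Pres.exists_isotropic`), and put
`w_i = X_i - p_i X_{i₀}`, `b = Σ (Mp)_j X_j = Σ (Mp)_j w_j`. The relation reads
`X_{i₀} b = Σ m_ij w_i X_j`, so that, if `(Mp)_{i₁} ≠ 0` and `i₁ ≠ i₀`, the right ideal generated by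
`b` and the `X_{i₀}^j w_i` with `i ≠ i₀, i₁` is two-sided; the quotient by it is a quotient of
`L[X_{i₀}, z]`. Freeness (`Pres.psi_injective`) holds because the expected coordinates of an element
with respect to these generators can be defined through a block triangular representation of `R'`
(`Pres.exists_rho`), in the manner of a Fox derivative.

Let `φ : R^m → R`, `f ↦ Σ f_i h_i`, with kernel `K`, and let `K'` be the kernel of its extension to
`R'`. Modulo a finitely generated submodule, `K'` consists of vectors `κ ∈ K' ∩ E^m`. Write
`κ = Σ e_t v_t`; then `0 = φ(κ) = Σ e_t φ(v_t)` forces `v_t ∈ K'`. Hence `K'` is generated by a finite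
set together with `Σ X_i K'` (`ker_of_free_ideal`), and applying linear functionals `L → k`
gives the same for `K` (`ker_descent`). If the `h_i` are homogeneous, then so is `K`, and the graded
Nakayama lemma (`graded_nakayama`) shows that `K` is finitely generated (`Pres.coherent`).

The grading is carried by the coaction `δ : R → R[T]`, `X_i ↦ X_i T`, `z ↦ z T`: the component of
degree `i` of `a` is the coefficient of `T^i` in `δ a`.
-/

/-!
STATEMENT 13: For A = T(V)/⟨r⟩ a connected graded 2-Calabi-Yau algebra (i.e. r
defined by an invertible anti-symmetric matrix M), the polynomial extension
A[z] = T(V⊕kz)/⟨r, z⊗x_i − x_i⊗z⟩ is a graded coherent algebra (graded left and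
right coherent: every finitely generated homogeneous one-sided ideal is
finitely presented).
-/

open TensorProduct Matrix

noncomputable section

variable (k : Type) [Field k] (n : ℕ)

variable (M : Matrix (Fin n) (Fin n) k)

variable (δ₀ : (Fin n → k) →ₗ[k] (Fin n → k) ⊗[k] (Fin n → k))

/-! ### The presentation -/

/-- A presentation of the `F`-algebra `R` by generators `X_i`, `Z` and relations
`Σ m_ij X_i X_j = 0`, `Z X_i = X_i Z`. The field `lift` is the existence half of the universal
property; uniqueness follows from `gen`. -/
structure Pres (F : Type) [CommRing F] {n : ℕ} (M : Matrix (Fin n) (Fin n) F)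
    (R : Type) [Ring R] [Algebra F R] where
  X : Fin n → R
  Z : R
  relM : ∑ i, ∑ j, M i j • (X i * X j) = 0
  relZ : ∀ i, Z * X i = X i * Z
  gen : Algebra.adjoin F (insert Z (Set.range X)) = ⊤
  lift : ∀ (E : Type) [Ring E] [Algebra F E] (X' : Fin n → E) (Z' : E),
    ∑ i, ∑ j, M i j • (X' i * X' j) = 0 → (∀ i, Z' * X' i = X' i * Z') →
    ∃ f : R →ₐ[F] E, (∀ i, f (X i) = X' i) ∧ f Z = Z'

/-- The relation read backwards: for antisymmetric `M`, swapping the two tensor factors of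
`Σ m_ij x_i x_j` changes its sign. -/
theorem rel_op {F : Type} [CommRing F] {n : ℕ} {M : Matrix (Fin n) (Fin n) F} (hM : Mᵀ = -M)
    {E : Type} [Ring E] [Algebra F E] (X : Fin n → E) (h : ∑ i, ∑ j, M i j • (X i * X j) = 0) :
    ∑ i, ∑ j, M i j • (MulOpposite.op (X i) * MulOpposite.op (X j)) = 0 := by
  have h' : ∑ i, ∑ j, M i j • (X j * X i) = 0 := by
    rw [Finset.sum_comm, ← neg_eq_zero, ← h, ← Finset.sum_neg_distrib]
    refine Finset.sum_congr rfl fun i _ => ?_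
    rw [← Finset.sum_neg_distrib]
    refine Finset.sum_congr rfl fun j _ => ?_
    have h1 : M j i = -M i j := congrFun (congrFun hM i) j
    rw [h1, neg_smul, neg_neg]
  have := congrArg (MulOpposite.opAddEquiv (α := E)) h'
  simpa only [map_sum, MulOpposite.opAddEquiv_apply, MulOpposite.op_smul, MulOpposite.op_mul,
    MulOpposite.op_zero] using this

namespace Pres

section basic
variable {F : Type} [CommRing F] {n : ℕ} {M : Matrix (Fin n) (Fin n) F}
    {R : Type} [Ring R] [Algebra F R] (P : Pres F M R)
include P

/-- A subspace stable under left multiplication by the generators is stable under left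
multiplication by `R`. -/
theorem left_ind (Q : Submodule F R) (hX : ∀ i, ∀ q ∈ Q, P.X i * q ∈ Q)
    (hZ : ∀ q ∈ Q, P.Z * q ∈ Q) (a : R) : ∀ q ∈ Q, a * q ∈ Q := by
  have ha : a ∈ Algebra.adjoin F (insert P.Z (Set.range P.X)) := by
    rw [P.gen]; trivial
  induction ha using Algebra.adjoin_induction with
  | mem v hv =>
    rcases hv with rfl | ⟨i, rfl⟩
    · exact hZ
    · exact hX i
  | algebraMap r =>
    intro q hq
    rw [← Algebra.smul_def]
    exact Q.smul_mem _ hq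
  | add a b _ _ iha ihb =>
    intro q hq
    rw [add_mul]
    exact Q.add_mem (iha q hq) (ihb q hq)
  | mul a b _ _ iha ihb =>
    intro q hq
    rw [mul_assoc]
    exact iha _ (ihb q hq)

theorem left_ind_one (Q : Submodule F R) (h1 : (1 : R) ∈ Q)
    (hX : ∀ i, ∀ q ∈ Q, P.X i * q ∈ Q)
    (hZ : ∀ q ∈ Q, P.Z * q ∈ Q) (a : R) : a ∈ Q := by
  simpa using P.left_ind Q hX hZ a 1 h1

theorem Z_comm (a : R) : P.Z * a = a * P.Z := by
  have := P.left_ind_one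
    { carrier := {a | P.Z * a = a * P.Z}
      add_mem' := fun {a b} ha hb => by
        simp only [Set.mem_ofPred_eq] at *
        rw [mul_add, add_mul, ha, hb]
      zero_mem' := by simp
      smul_mem' := fun c a ha => by
        simp only [Set.mem_ofPred_eq] at *
        rw [mul_smul_comm, smul_mul_assoc, ha] } (by simp)
    (fun i q hq => by
      change P.Z * (P.X i * q) = P.X i * q * P.Z
      change P.Z * q = q * P.Z at hq
      rw [← mul_assoc, P.relZ, mul_assoc, hq, mul_assoc])
    (fun q hq => by
      change P.Z * (P.Z * q) = P.Z * q * P.Z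
      change P.Z * q = q * P.Z at hq
      rw [mul_assoc, ← hq]) a
  exact this

/-- For antisymmetric `M`, the opposite algebra has the same presentation. -/
def op (hM : Mᵀ = -M) : Pres F M Rᵐᵒᵖ where
  X i := MulOpposite.op (P.X i)
  Z := MulOpposite.op P.Z
  relM := rel_op hM P.X P.relM
  relZ i := by rw [← MulOpposite.op_mul, ← MulOpposite.op_mul, P.relZ]
  gen := by
    rw [eq_top_iff]
    rintro a -
    obtain ⟨a, rfl⟩ := MulOpposite.op_surjective a
    have ha : a ∈ Algebra.adjoin F (insert P.Z (Set.range P.X)) := by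
      rw [P.gen]; trivial
    induction ha using Algebra.adjoin_induction with
    | mem v hv =>
      refine Algebra.subset_adjoin ?_
      rcases hv with rfl | ⟨i, rfl⟩
      · exact Or.inl rfl
      · exact Or.inr ⟨i, rfl⟩
    | algebraMap r => exact Subalgebra.algebraMap_mem _ r
    | add a b _ _ iha ihb => exact add_mem iha ihb
    | mul a b _ _ iha ihb => exact mul_mem ihb iha
  lift E _ _ X' Z' h1 h2 := by
    obtain ⟨f, hf1, hf2⟩ := P.lift Eᵐᵒᵖ (fun i => MulOpposite.op (X' i)) (MulOpposite.op Z')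
      (rel_op hM X' h1)
      (fun i => by rw [← MulOpposite.op_mul, ← MulOpposite.op_mul, h2])
    refine ⟨AlgHom.opComm f, fun i => ?_, ?_⟩
    · simp [AlgHom.opComm, hf1]
    · simp [AlgHom.opComm, hf2]

/-- Extension of scalars of a presentation. -/
def baseChange (L : Type) [Field L] [Algebra F L] :
    Pres L (M.map (algebraMap F L)) (L ⊗[F] R) where
  X i := 1 ⊗ₜ P.X i
  Z := 1 ⊗ₜ P.Z
  relM := by
    have := congrArg (fun a => (1 : L) ⊗ₜ[F] a) P.relM
    simpa [TensorProduct.tmul_sum] using this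
  relZ i := by simp [P.relZ]
  gen := by
    rw [eq_top_iff]
    rintro a -
    have h : ∀ a : R, (1 : L) ⊗ₜ[F] a ∈ Algebra.adjoin L
        (insert ((1 : L) ⊗ₜ[F] P.Z) (Set.range fun i => (1 : L) ⊗ₜ[F] P.X i)) := by
      intro a
      have ha : a ∈ Algebra.adjoin F (insert P.Z (Set.range P.X)) := by
        rw [P.gen]; trivial
      induction ha using Algebra.adjoin_induction with
      | mem v hv =>
        refine Algebra.subset_adjoin ?_
        rcases hv with rfl | ⟨i, rfl⟩
        · exact Or.inl rfl
        · exact Or.inr ⟨i, rfl⟩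
      | algebraMap r =>
        rw [← Algebra.TensorProduct.algebraMap_apply',
          IsScalarTower.algebraMap_apply F L (L ⊗[F] R)]
        exact Subalgebra.algebraMap_mem _ _
      | add a b _ _ iha ihb => rw [TensorProduct.tmul_add]; exact add_mem iha ihb
      | mul a b _ _ iha ihb =>
        have := mul_mem iha ihb
        rwa [Algebra.TensorProduct.tmul_mul_tmul, one_mul] at this
    induction a using TensorProduct.induction_on with
    | zero => exact zero_mem _
    | tmul l a =>
      have := Subalgebra.smul_mem _ (h a) l
      rwa [TensorProduct.smul_tmul', smul_eq_mul, mul_one] at this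
    | add a b iha ihb => exact add_mem iha ihb
  lift E _ _ X' Z' h1 h2 := by
    let : Algebra F E := Algebra.compHom E (algebraMap F L)
    have : IsScalarTower F L E := IsScalarTower.of_algebraMap_eq fun _ => rfl
    obtain ⟨f, hf1, hf2⟩ := P.lift E X' Z'
      (by simpa [algebraMap_smul] using h1) h2
    have hc : ∀ l a, Commute (Algebra.ofId L E l) (f a) := fun l a => Algebra.commutes l (f a)
    refine ⟨Algebra.TensorProduct.lift (Algebra.ofId L E) f hc, fun i => ?_, ?_⟩
    · rw [Algebra.TensorProduct.lift_tmul, hf1, map_one, one_mul]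
    · rw [Algebra.TensorProduct.lift_tmul, hf2, map_one, one_mul]

end basic
end Pres

/-! ### A right linearly independent family -/

namespace Pres

section key
variable {L : Type} [Field L] {n : ℕ} {M : Matrix (Fin n) (Fin n) L}
    {R : Type} [Ring R] [Algebra L R] (P : Pres L M R) (p : Fin n → L) (i₀ i₁ : Fin n)

/-- The index set of the right basis `e` of the ideal `E`: `none` stands for `b`, and `some (i, j)`
for `X_{i₀}^j w_i`, where `i ≠ i₀, i₁`. -/
abbrev Idx (i₀ i₁ : Fin n) := Option ({i : Fin n // i ≠ i₀ ∧ i ≠ i₁} × ℕ)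

/-- The linear form `w_i = X_i - p_i X_{i₀}`. -/
def w (i : Fin n) : R := P.X i - p i • P.X i₀

/-- The linear form `b = Σ (Mp)_j X_j`. -/
def b : R := ∑ j, (M *ᵥ p) j • P.X j

/-- The right basis of the ideal `E`: the element `b` and the elements `X_{i₀}^j w_i`. -/
def e : Idx i₀ i₁ → R
  | none => P.b p
  | some (i, j) => P.X i₀ ^ j * P.w p i₀ i

variable (R) in
/-- The free right `R`-module on `Idx i₀ i₁`, which receives the coordinates with respect to `e`.
Right `R`-modules are encoded as modules over `Rᵐᵒᵖ`. -/
abbrev PP (i₀ i₁ : Fin n) := Idx i₀ i₁ →₀ Rᵐᵒᵖ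

variable (R) in
/-- The coordinates of `w_i` for `i ≠ i₀, i₁`, and zero for `i = i₀, i₁`. -/
def d0 (i : Fin n) : PP R i₀ i₁ :=
  if h : i ≠ i₀ ∧ i ≠ i₁ then Finsupp.single (some (⟨i, h⟩, 0)) 1 else 0

variable (R M) in
/-- The coordinates of `w_i` for every `i`. They vanish for `i = i₀`; for `i = i₁` they come from
solving `b = Σ (Mp)_j w_j` for `w_{i₁}`, which requires `(Mp)_{i₁} ≠ 0`. -/
def d (i : Fin n) : PP R i₀ i₁ :=
  d0 R i₀ i₁ i + if i = i₁ then ((M *ᵥ p) i₁)⁻¹ •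
    (Finsupp.single none 1 - ∑ j, (M *ᵥ p) j • d0 R i₀ i₁ j) else 0

theorem sum_d (hβ : (M *ᵥ p) i₁ ≠ 0) :
    ∑ j, (M *ᵥ p) j • d M R p i₀ i₁ j = Finsupp.single none 1 := by
  simp [d, Finset.sum_add_distrib, smul_add, smul_ite, smul_smul, mul_inv_cancel₀ hβ]

theorem d_of_ne (i : Fin n) (h : i ≠ i₀ ∧ i ≠ i₁) :
    d M R p i₀ i₁ i = Finsupp.single (some (⟨i, h⟩, 0)) 1 := by
  simp [d, d0, h]

theorem d_zero (h01 : i₁ ≠ i₀) : d M R p i₀ i₁ i₀ = 0 := by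
  simp [d, d0, h01.symm]

/-- Left multiplication by `X_{i₀}` in coordinates: it sends `X_{i₀}^j w_i` to `X_{i₀}^{j+1} w_i`
and `b` to `Σ m_ij w_i X_j`. -/
def Xop : PP R i₀ i₁ →ₗ[Rᵐᵒᵖ] PP R i₀ i₁ :=
  Finsupp.linearCombination Rᵐᵒᵖ fun
    | none => ∑ i, ∑ j, M i j • (MulOpposite.op (P.X j) • d M R p i₀ i₁ i)
    | some (i, j) => Finsupp.single (some (i, j + 1)) 1

/-- The operator `(f, q) ↦ (X_i f, d_i f + p_i X_{i₀} q)` on `R × PP`, block triangular for the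
second factor: it describes left multiplication by `X_i = w_i + p_i X_{i₀}` on an element `f` and on
coordinates `q`. -/
def rhoX (i : Fin n) : Module.End Rᵐᵒᵖ (Rᵐᵒᵖ × PP R i₀ i₁) :=
  LinearMap.prod
    (LinearMap.toSpanSingleton Rᵐᵒᵖ Rᵐᵒᵖ (MulOpposite.op (P.X i)) ∘ₗ LinearMap.fst _ _ _)
    (LinearMap.toSpanSingleton Rᵐᵒᵖ (PP R i₀ i₁) (d M R p i₀ i₁ i) ∘ₗ LinearMap.fst _ _ _ +
      p i • (P.Xop p i₀ i₁ ∘ₗ LinearMap.snd _ _ _))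

/-- Multiplication by the central element `Z` on `R × PP`. -/
def rhoZ : Module.End Rᵐᵒᵖ (Rᵐᵒᵖ × PP R i₀ i₁) where
  toFun v := (MulOpposite.op P.Z) • v
  map_add' := smul_add _
  map_smul' s v := by
    have : MulOpposite.op P.Z * s = s * MulOpposite.op P.Z := by
      rw [← MulOpposite.op_unop s, ← MulOpposite.op_mul, ← MulOpposite.op_mul, P.Z_comm]
    simp only [smul_smul, RingHom.id_apply, this]

@[simp] theorem rhoX_apply (i : Fin n) (f : Rᵐᵒᵖ) (q : PP R i₀ i₁) :
    P.rhoX p i₀ i₁ i (f, q) =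
      (f * MulOpposite.op (P.X i), f • d M R p i₀ i₁ i + p i • P.Xop p i₀ i₁ q) := rfl

theorem rhoZ_apply (v : Rᵐᵒᵖ × PP R i₀ i₁) : P.rhoZ i₀ i₁ v = MulOpposite.op P.Z • v := rfl

theorem sum_Mp (hM : Mᵀ = -M) (j : Fin n) : ∑ i, M i j * p i = - (M *ᵥ p) j := by
  rw [mulVec, dotProduct, ← Finset.sum_neg_distrib]
  refine Finset.sum_congr rfl fun i _ => ?_
  have h1 : M i j = -M j i := congrFun (congrFun hM j) i
  rw [h1, neg_mul]

omit P in
theorem rho_rho_aux {S N : Type} [Ring S] [Algebra L S] [AddCommGroup N] [Module S N] [Module L N]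
    [IsScalarTower L S N] (T : N →ₗ[S] N) (f x : S) (d₁ d₂ q : N) (m a₁ a₂ : L) :
    m • ((f * x) • d₁ + a₁ • T (f • d₂ + a₂ • T q)) =
      f • m • (x • d₁) + (m * a₁) • (f • T d₂) + (m * a₁ * a₂) • T (T q) := by
  have hc : m • f • x • d₁ = f • m • x • d₁ := by
    rw [← algebraMap_smul S m (x • d₁), ← algebraMap_smul S m (f • x • d₁), smul_smul,
      smul_smul f, Algebra.commutes]
  rw [map_add, map_smul, LinearMap.map_smul_of_tower, smul_add, smul_add, smul_add, smul_smul m,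
    smul_smul a₁, smul_smul m, mul_smul f x, hc, add_assoc, mul_assoc]

/-- The operators `rhoX i` and `rhoZ` satisfy the defining relations of `R`. For the quadratic
relation, the cross terms cancel by the choice of `Xop` on `b`, and the terms in `Xop²` carry the
coefficient `pᵀ M p = 0`. -/
theorem exists_rho (hM : Mᵀ = -M) (hiso : p ⬝ᵥ (M *ᵥ p) = 0) (hβ : (M *ᵥ p) i₁ ≠ 0) :
    ∃ ρ : R →ₐ[L] Module.End Rᵐᵒᵖ (Rᵐᵒᵖ × PP R i₀ i₁),
      (∀ i, ρ (P.X i) = P.rhoX p i₀ i₁ i) ∧ ρ P.Z = P.rhoZ i₀ i₁ := by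
  refine P.lift (Module.End Rᵐᵒᵖ (Rᵐᵒᵖ × PP R i₀ i₁)) (P.rhoX p i₀ i₁) (P.rhoZ i₀ i₁) ?_ ?_
  · refine LinearMap.ext ?_
    rintro ⟨f, q⟩
    have h0 : P.Xop p i₀ i₁ (∑ j, (M *ᵥ p) j • d M R p i₀ i₁ j) =
        ∑ i, ∑ j, M i j • (MulOpposite.op (P.X j) • d M R p i₀ i₁ i) := by
      rw [sum_d _ _ _ hβ, Xop, Finsupp.linearCombination_single, one_smul]
    have h1 : ∑ i, ∑ j, (M i j * p i) • (f • P.Xop p i₀ i₁ (d M R p i₀ i₁ j)) =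
        - (f • ∑ i, ∑ j, M i j • (MulOpposite.op (P.X j) • d M R p i₀ i₁ i)) := by
      rw [← h0, Finset.sum_comm, map_sum, Finset.smul_sum, ← Finset.sum_neg_distrib]
      refine Finset.sum_congr rfl fun j _ => ?_
      rw [← Finset.sum_smul, sum_Mp p hM, neg_smul, LinearMap.map_smul_of_tower, smul_comm]
    have h2 : ∑ i, ∑ j, (M i j * p i * p j) • P.Xop p i₀ i₁ (P.Xop p i₀ i₁ q) = 0 := by
      simp_rw [← Finset.sum_smul]
      rw [show ∑ i, ∑ j, M i j * p i * p j = p ⬝ᵥ (M *ᵥ p) by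
        simp only [dotProduct, mulVec, Finset.mul_sum]
        exact Finset.sum_congr rfl fun i _ => Finset.sum_congr rfl fun j _ => by ring,
        hiso, zero_smul]
    have h3 := congrArg MulOpposite.op P.relM
    have key : ∀ i j, (M i j • (P.rhoX p i₀ i₁ i * P.rhoX p i₀ i₁ j)) (f, q) =
        (f * MulOpposite.op (M i j • (P.X i * P.X j)),
          f • M i j • (MulOpposite.op (P.X j) • d M R p i₀ i₁ i) +
          (M i j * p i) • (f • P.Xop p i₀ i₁ (d M R p i₀ i₁ j)) +
          (M i j * p i * p j) • P.Xop p i₀ i₁ (P.Xop p i₀ i₁ q)) := by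
      intro i j
      rw [LinearMap.smul_apply, Module.End.mul_apply, rhoX_apply, rhoX_apply]
      refine Prod.ext ?_ ?_
      · simp [mul_assoc]
      · exact rho_rho_aux (P.Xop p i₀ i₁) f (MulOpposite.op (P.X j)) _ _ q (M i j) (p i) (p j)
    simp only [LinearMap.sum_apply, key, LinearMap.zero_apply]
    refine Prod.ext ?_ ?_
    · simp only [Prod.fst_sum, ← Finset.mul_sum]
      have : ∑ i, ∑ j, MulOpposite.op (M i j • (P.X i * P.X j)) = 0 := by
        have h := congrArg (MulOpposite.opAddEquiv (α := R)) P.relM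
        simpa only [map_sum, MulOpposite.opAddEquiv_apply, MulOpposite.op_zero] using h
      rw [this, mul_zero]; rfl
    · simp only [Prod.snd_sum, Finset.sum_add_distrib, h1, h2]
      simp only [← Finset.smul_sum]
      simp
  · intro i
    refine LinearMap.ext fun v => ?_
    rw [Module.End.mul_apply, Module.End.mul_apply, rhoZ_apply, rhoZ_apply, map_smul]

/-- The map `(y_t) ↦ Σ e_t y_t`. Its range is the ideal `E`. -/
def psi : (Idx i₀ i₁ →₀ R) →+ R :=
  Finsupp.liftAddHom fun t => AddMonoidHom.mulLeft (P.e p i₀ i₁ t)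

theorem psi_single (t) (y : R) : P.psi p i₀ i₁ (Finsupp.single t y) = P.e p i₀ i₁ t * y := by
  simp [psi]

theorem e_mul_mem (t) (y : R) : P.e p i₀ i₁ t * y ∈ (P.psi p i₀ i₁).range :=
  ⟨Finsupp.single t y, P.psi_single p i₀ i₁ t y⟩

/-- The family `e` is right linearly independent: the second component of `ρ(a)(1, 0)` recovers the
coordinates of `a = Σ e_t y_t`. -/
theorem psi_injective (hM : Mᵀ = -M) (hiso : p ⬝ᵥ (M *ᵥ p) = 0) (hβ : (M *ᵥ p) i₁ ≠ 0)
    (hp : p i₀ = 1) (h01 : i₁ ≠ i₀) (f : Idx i₀ i₁ →₀ R) (hf : P.psi p i₀ i₁ f = 0) : f = 0 := by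
  obtain ⟨ρ, hρX, hρZ⟩ := P.exists_rho p i₀ i₁ hM hiso hβ
  have hfst : ∀ a : R, (ρ a (1, 0)).1 = MulOpposite.op a := by
    intro a
    let Q : Submodule L R :=
      { carrier := {a | (ρ a (1, 0)).1 = MulOpposite.op a}
        add_mem' := fun {a b} ha hb => by
          simp only [Set.mem_ofPred_eq] at *
          rw [map_add, LinearMap.add_apply, Prod.fst_add, ha, hb, MulOpposite.op_add]
        zero_mem' := by simp
        smul_mem' := fun c a ha => by
          simp only [Set.mem_ofPred_eq] at *
          rw [map_smul, LinearMap.smul_apply, Prod.smul_fst, ha, MulOpposite.op_smul] }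
    refine P.left_ind_one Q ?_ ?_ ?_ a
    · change (ρ 1 (1, 0)).1 = MulOpposite.op 1
      rw [map_one]; rfl
    · intro i q hq
      change (ρ (P.X i * q) (1, 0)).1 = MulOpposite.op (P.X i * q)
      change (ρ q (1, 0)).1 = MulOpposite.op q at hq
      rw [map_mul, hρX, Module.End.mul_apply, MulOpposite.op_mul, ← hq]
      rfl
    · intro q hq
      change (ρ (P.Z * q) (1, 0)).1 = MulOpposite.op (P.Z * q)
      change (ρ q (1, 0)).1 = MulOpposite.op q at hq
      rw [map_mul, hρZ, Module.End.mul_apply, P.Z_comm, MulOpposite.op_mul, ← hq]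
      rfl
  have hX₀ : ∀ v : Rᵐᵒᵖ × PP R i₀ i₁, (ρ (P.X i₀) v).2 = P.Xop p i₀ i₁ v.2 := by
    rintro ⟨f, q⟩
    rw [hρX, rhoX_apply, d_zero _ _ _ h01, smul_zero, zero_add, hp, one_smul]
  have hw : ∀ i (v : Rᵐᵒᵖ × PP R i₀ i₁), (ρ (P.w p i₀ i) v).2 = v.1 • d M R p i₀ i₁ i := by
    rintro i ⟨f, q⟩
    rw [w, map_sub, map_smul, LinearMap.sub_apply, LinearMap.smul_apply, Prod.snd_sub,
      Prod.smul_snd, hX₀, hρX, rhoX_apply, add_sub_cancel_right]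
  have he : ∀ t (v : Rᵐᵒᵖ × PP R i₀ i₁), (ρ (P.e p i₀ i₁ t) v).2 = Finsupp.single t v.1 := by
    rintro (_ | ⟨i, j⟩) v
    · have hb : P.b p = ∑ j, (M *ᵥ p) j • P.w p i₀ j := by
        simp only [b, w, smul_sub, Finset.sum_sub_distrib, smul_smul, ← Finset.sum_smul]
        rw [show ∑ j, (M *ᵥ p) j * p j = p ⬝ᵥ (M *ᵥ p) from dotProduct_comm _ _, hiso, zero_smul,
          sub_zero]
      rw [e, hb, map_sum, LinearMap.sum_apply, Prod.snd_sum]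
      simp only [map_smul, LinearMap.smul_apply, Prod.smul_snd, hw]
      have : ∀ j, (M *ᵥ p) j • v.1 • d M R p i₀ i₁ j = v.1 • (M *ᵥ p) j • d M R p i₀ i₁ j :=
        fun j => smul_comm _ _ _
      simp only [this]
      rw [← Finset.smul_sum, sum_d _ _ _ hβ, Finsupp.smul_single, smul_eq_mul, mul_one]
    · rw [e, map_mul, Module.End.mul_apply]
      induction j with
      | zero =>
        rw [pow_zero, map_one, Module.End.one_apply, hw, d_of_ne _ _ _ _ i.2, Finsupp.smul_single,
          smul_eq_mul, mul_one]
      | succ j ih =>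
        rw [pow_succ', map_mul, Module.End.mul_apply, hX₀, ih, Xop,
          Finsupp.linearCombination_single, Finsupp.smul_single, smul_eq_mul, mul_one]
  have hD : ∀ f : Idx i₀ i₁ →₀ R, (ρ (P.psi p i₀ i₁ f) (1, 0)).2 =
      f.mapRange MulOpposite.op rfl := by
    intro f
    induction f using Finsupp.induction_linear with
    | zero => simp
    | add f g hf hg =>
      rw [map_add, map_add, LinearMap.add_apply, Prod.snd_add, hf, hg,
        Finsupp.mapRange_add (fun _ _ => rfl)]
    | single t y =>
      rw [psi_single, map_mul, Module.End.mul_apply, he, hfst, Finsupp.mapRange_single]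
  have := hD f
  rw [hf, map_zero] at this
  ext t
  have h := DFunLike.congr_fun this t
  exact (MulOpposite.op_injective h).symm

end key
end Pres

/-! ### A free ideal with Noetherian quotient -/

namespace Pres

/-- A subalgebra generated by finitely many pairwise commuting elements is Noetherian. -/
theorem noeth_adjoin {L A : Type} [Field L] [Ring A] [Algebra L A] (s : Set A) (hs : s.Finite)
    (hcomm : ∀ a ∈ s, ∀ b ∈ s, a * b = b * a) : IsNoetherianRing (Algebra.adjoin L s) := by
  have := Algebra.isMulCommutative_adjoin L hcomm
  have : Algebra.FiniteType L (Algebra.adjoin L s) :=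
    (Subalgebra.fg_iff_finiteType _).1 ⟨hs.toFinset, by simp⟩
  let _ : CommRing (Algebra.adjoin L s) :=
    { (inferInstance : Ring (Algebra.adjoin L s)) with
      mul_comm := fun a b => IsMulCommutative.is_comm.comm a b }
  exact Algebra.FiniteType.isNoetherianRing L (Algebra.adjoin L s)

section key
variable {L : Type} [Field L] {n : ℕ} {M : Matrix (Fin n) (Fin n) L}
    {R : Type} [Ring R] [Algebra L R] (P : Pres L M R) (p : Fin n → L) (i₀ i₁ : Fin n)

/-- All `w_i` lie in the right ideal `E`, including `w_{i₁}`, because `b = Σ (Mp)_j w_j` with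
`(Mp)_{i₁} ≠ 0`. -/
theorem w_mul_mem (hβ : (M *ᵥ p) i₁ ≠ 0) (hiso : p ⬝ᵥ (M *ᵥ p) = 0) (hp : p i₀ = 1)
    (i : Fin n) (y : R) :
    P.w p i₀ i * y ∈ (P.psi p i₀ i₁).range := by
  have hw0 : P.w p i₀ i₀ = 0 := by rw [w, hp, one_smul, sub_self]
  have hgen : ∀ i, i ≠ i₁ → ∀ y : R, P.w p i₀ i * y ∈ (P.psi p i₀ i₁).range := by
    intro i hi y
    by_cases h0 : i = i₀
    · rw [h0, hw0, zero_mul]; exact zero_mem _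
    · have := P.e_mul_mem p i₀ i₁ (some (⟨i, h0, hi⟩, 0)) y
      rwa [e, pow_zero, one_mul] at this
  by_cases hi : i = i₁
  · subst hi
    have hb : P.b p = ∑ j, (M *ᵥ p) j • P.w p i₀ j := by
      simp only [b, w, smul_sub, Finset.sum_sub_distrib, smul_smul, ← Finset.sum_smul]
      rw [show ∑ j, (M *ᵥ p) j * p j = p ⬝ᵥ (M *ᵥ p) from dotProduct_comm _ _, hiso, zero_smul,
        sub_zero]
    have h1 : P.w p i₀ i * y = P.b p * (((M *ᵥ p) i)⁻¹ • y) -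
        ∑ j ∈ Finset.univ.erase i, P.w p i₀ j * ((((M *ᵥ p) i)⁻¹ * (M *ᵥ p) j) • y) := by
      rw [hb, Finset.sum_mul, ← Finset.add_sum_erase _ _ (Finset.mem_univ i)]
      simp only [smul_mul_assoc, mul_smul_comm, smul_smul, inv_mul_cancel₀ hβ, one_smul]
      rw [add_sub_cancel_right]
    rw [h1]
    exact sub_mem (P.e_mul_mem p i₀ i none _)
      (sum_mem fun j hj => hgen j (Finset.ne_of_mem_erase hj) _)
  · exact hgen i hi y

/-- `E` is stable under left multiplication by `X_i`. Modulo `w_i` this concerns `X_{i₀}` only, and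
`X_{i₀} b = Σ m_ij w_i X_j` by the quadratic relation. -/
theorem X_mul_mem (hβ : (M *ᵥ p) i₁ ≠ 0) (hiso : p ⬝ᵥ (M *ᵥ p) = 0) (hp : p i₀ = 1)
    (hM : Mᵀ = -M) (i : Fin n) (y : R) (hy : y ∈ (P.psi p i₀ i₁).range) :
    P.X i * y ∈ (P.psi p i₀ i₁).range := by
  have hX : P.X i = P.w p i₀ i + p i • P.X i₀ := by rw [w, sub_add_cancel]
  have hsmul : ∀ (c : L) (y : R), y ∈ (P.psi p i₀ i₁).range → c • y ∈ (P.psi p i₀ i₁).range := by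
    rintro c _ ⟨f, rfl⟩
    induction f using Finsupp.induction_linear with
    | zero => simp
    | add f g hf hg => rw [map_add, smul_add]; exact add_mem hf hg
    | single t y =>
      rw [psi_single, ← mul_smul_comm]
      exact P.e_mul_mem _ _ _ _ _
  rw [hX, add_mul, smul_mul_assoc]
  refine add_mem (P.w_mul_mem p i₀ i₁ hβ hiso hp i y) (hsmul _ _ ?_)
  obtain ⟨f, rfl⟩ := hy
  induction f using Finsupp.induction_linear with
  | zero => simp
  | add f g hf hg => rw [map_add, mul_add]; exact add_mem hf hg
  | single t y =>
    rw [psi_single]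
    rcases t with _ | ⟨j, k⟩
    · have h1 : P.X i₀ * P.b p = ∑ i, ∑ j, P.w p i₀ i * (M i j • P.X j) := by
        have h2 : ∑ i, ∑ j, P.w p i₀ i * (M i j • P.X j) =
            ∑ i, ∑ j, M i j • (P.X i * P.X j) - ∑ j, ∑ i, (M i j * p i) • (P.X i₀ * P.X j) := by
          rw [Finset.sum_comm (γ := Fin n) (f := fun j i => (M i j * p i) • (P.X i₀ * P.X j)),
            ← Finset.sum_sub_distrib]
          refine Finset.sum_congr rfl fun i _ => ?_
          rw [← Finset.sum_sub_distrib]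
          refine Finset.sum_congr rfl fun j _ => ?_
          rw [w, sub_mul, mul_smul_comm, smul_mul_assoc, mul_smul_comm, smul_smul, mul_comm (p i)]
        rw [h2, P.relM, zero_sub, b, Finset.mul_sum, ← Finset.sum_neg_distrib]
        refine Finset.sum_congr rfl fun j _ => ?_
        rw [← Finset.sum_smul, sum_Mp p hM, neg_smul, neg_neg, mul_smul_comm]
      rw [e, ← mul_assoc, h1, Finset.sum_mul]
      refine sum_mem fun i _ => ?_
      rw [Finset.sum_mul]
      refine sum_mem fun j _ => ?_
      rw [mul_assoc]
      exact P.w_mul_mem p i₀ i₁ hβ hiso hp i _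
    · have := P.e_mul_mem p i₀ i₁ (some (j, k + 1)) y
      rwa [e, pow_succ', mul_assoc, mul_assoc, ← mul_assoc (P.X i₀ ^ k)] at this

theorem Z_mul_mem (y : R) (hy : y ∈ (P.psi p i₀ i₁).range) :
    P.Z * y ∈ (P.psi p i₀ i₁).range := by
  obtain ⟨f, rfl⟩ := hy
  induction f using Finsupp.induction_linear with
  | zero => simp
  | add f g hf hg => rw [map_add, mul_add]; exact add_mem hf hg
  | single t y =>
    rw [psi_single, ← mul_assoc, P.Z_comm, mul_assoc]
    exact P.e_mul_mem _ _ _ _ _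

/-- The ideal `E = Σ e_t R` is two-sided and free as a right module on `e`, the `e_t` lie in the left
ideal generated by the `X_i`, and `R / E` is left Noetherian, being spanned over the commutative
algebra `L[X_{i₀}, Z]` by the class of `1`. -/
theorem key (hM : Mᵀ = -M) (hiso : p ⬝ᵥ (M *ᵥ p) = 0) (hβ : (M *ᵥ p) i₁ ≠ 0)
    (hp : p i₀ = 1) (h01 : i₁ ≠ i₀) :
    ∃ (I : Type) (e : I → R) (E : Submodule R R),
      (∀ f : I →₀ R, (f.sum fun t y => e t * y) = 0 → f = 0) ∧
      (∀ y ∈ E, ∃ f : I →₀ R, y = f.sum fun t y => e t * y) ∧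
      (∀ t, e t ∈ Submodule.span R (Set.range P.X)) ∧
      IsNoetherian R (R ⧸ E) := by
  have hpsi : ∀ f, P.psi p i₀ i₁ f = f.sum fun t y => P.e p i₀ i₁ t * y := fun f => rfl
  have hsmul : ∀ (c : L) (y : R), y ∈ (P.psi p i₀ i₁).range → c • y ∈ (P.psi p i₀ i₁).range := by
    rintro c _ ⟨f, rfl⟩
    induction f using Finsupp.induction_linear with
    | zero => simp
    | add f g hf hg => rw [map_add, smul_add]; exact add_mem hf hg
    | single t y =>
      rw [psi_single, ← mul_smul_comm]
      exact P.e_mul_mem _ _ _ _ _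
  let E₀ : Submodule L R :=
    { (P.psi p i₀ i₁).range with smul_mem' := hsmul }
  have hX : ∀ i, ∀ y ∈ E₀, P.X i * y ∈ E₀ := fun i y hy =>
    P.X_mul_mem p i₀ i₁ hβ hiso hp hM i y hy
  have hZ : ∀ y ∈ E₀, P.Z * y ∈ E₀ := fun y hy => P.Z_mul_mem p i₀ i₁ y hy
  let E : Submodule R R :=
    { (P.psi p i₀ i₁).range with smul_mem' := fun a y hy => P.left_ind E₀ hX hZ a y hy }
  have hE : ∀ i y, P.w p i₀ i * y ∈ E := fun i y => P.w_mul_mem p i₀ i₁ hβ hiso hp i y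
  refine ⟨Idx i₀ i₁, P.e p i₀ i₁, E, P.psi_injective p i₀ i₁ hM hiso hβ hp h01, ?_, ?_, ?_⟩
  · rintro y ⟨f, rfl⟩
    exact ⟨f, rfl⟩
  · have hXs : ∀ (c : L) i, c • P.X i ∈ Submodule.span R (Set.range P.X) := fun c i => by
      rw [Algebra.smul_def, ← smul_eq_mul]
      exact Submodule.smul_mem _ _ (Submodule.subset_span ⟨i, rfl⟩)
    rintro (_ | ⟨i, j⟩)
    · rw [e, b]
      exact sum_mem fun i _ => hXs _ i
    · rw [e, ← smul_eq_mul]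
      exact Submodule.smul_mem _ _ (sub_mem (Submodule.subset_span ⟨_, rfl⟩) (hXs _ _))
  · let s : Set R := {P.X i₀, P.Z}
    let C := Algebra.adjoin L s
    have hC : IsNoetherianRing C := by
      refine noeth_adjoin s (Set.toFinite _) ?_
      rintro a (rfl | rfl) b (rfl | rfl)
      · rfl
      · exact (P.relZ _).symm
      · exact P.relZ _
      · rfl
    let g : C →ₗ[C] (R ⧸ E) :=
      { toFun := fun c => Submodule.Quotient.mk (c : R)
        map_add' := fun a b => rfl
        map_smul' := fun a b => rfl }
    have hg : Function.Surjective g := by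
      intro y
      obtain ⟨a, rfl⟩ := Submodule.Quotient.mk_surjective E y
      have h : a ∈ E₀ ⊔ Subalgebra.toSubmodule C := by
        refine P.left_ind_one _ ?_ ?_ ?_ a
        · exact Submodule.mem_sup_right (one_mem C)
        · intro i q hq
          obtain ⟨u, hu, c, hc, rfl⟩ := Submodule.mem_sup.1 hq
          rw [mul_add, show P.X i * c = P.w p i₀ i * c + p i • (P.X i₀ * c) by
            rw [w, sub_mul, smul_mul_assoc, sub_add_cancel]]
          refine add_mem (Submodule.mem_sup_left (hX i u hu))
            (add_mem (Submodule.mem_sup_left (hE i c)) (Submodule.smul_mem _ _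
              (Submodule.mem_sup_right ?_)))
          exact mul_mem (S := Subalgebra L R) (s := C) (Algebra.subset_adjoin (Or.inl rfl)) hc
        · intro q hq
          obtain ⟨u, hu, c, hc, rfl⟩ := Submodule.mem_sup.1 hq
          rw [mul_add]
          refine add_mem (Submodule.mem_sup_left (hZ u hu)) (Submodule.mem_sup_right ?_)
          exact mul_mem (S := Subalgebra L R) (s := C) (Algebra.subset_adjoin (Or.inr rfl)) hc
      obtain ⟨u, hu, c, hc, rfl⟩ := Submodule.mem_sup.1 h
      refine ⟨⟨c, hc⟩, (Submodule.Quotient.eq E).2 ?_⟩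
      change c - (u + c) ∈ E
      rw [sub_add_cancel_right]
      exact E.neg_mem hu
    have : IsNoetherian C (R ⧸ E) := isNoetherian_of_surjective g (LinearMap.range_eq_top.2 hg)
    exact isNoetherian_of_tower C this

end key

theorem noeth_small {L : Type} [Field L] {n : ℕ} {M : Matrix (Fin n) (Fin n) L}
    {R : Type} [Ring R] [Algebra L R] (P : Pres L M R) (hn : n ≤ 1) : IsNoetherianRing R := by
  have h : IsNoetherianRing (⊤ : Subalgebra L R) := by
    rw [← P.gen]
    refine noeth_adjoin _ (Set.toFinite _) ?_
    have : Subsingleton (Fin n) := Fin.subsingleton_iff_le_one.2 hn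
    rintro a (rfl | ⟨i, rfl⟩) b (rfl | ⟨j, rfl⟩)
    · rfl
    · exact P.relZ _
    · exact (P.relZ _).symm
    · rw [Subsingleton.elim i j]
  exact isNoetherianRing_of_ringEquiv _ (Subalgebra.topEquiv (R := L) (A := R)).toRingEquiv

/-- Existence of a suitable isotropic vector. In characteristic `2` an antisymmetric matrix may have
non-zero diagonal entries; the square root provided by the algebraically closed field takes care of
that case. -/
theorem exists_isotropic {L : Type} [Field L] [IsAlgClosed L] {n : ℕ}
    {M : Matrix (Fin n) (Fin n) L} (hM : Mᵀ = -M) (hdet : IsUnit M.det) (hn : 2 ≤ n) :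
    ∃ (p : Fin n → L) (i₀ i₁ : Fin n), p ⬝ᵥ (M *ᵥ p) = 0 ∧ (M *ᵥ p) i₁ ≠ 0 ∧ p i₀ = 1 ∧
      i₁ ≠ i₀ := by
  have h : ∃ (p : Fin n → L) (i₀ : Fin n), p ⬝ᵥ (M *ᵥ p) = 0 ∧ p i₀ = 1 := by
    let a : Fin n := ⟨0, by omega⟩
    let b : Fin n := ⟨1, by omega⟩
    have hab : a ≠ b := by simp [a, b]
    by_cases h0 : M a a = 0
    · exact ⟨Pi.single a 1, a, by simp [h0], by simp⟩
    · obtain ⟨t, ht⟩ := IsAlgClosed.exists_pow_nat_eq (-(M b b) / M a a) (n := 2) (by norm_num)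
      refine ⟨Pi.single a t + Pi.single b 1, b, ?_, by simp [hab.symm]⟩
      have h1 : M b a = -M a b := congrFun (congrFun hM a) b
      simp [mulVec_add, add_dotProduct, h1]
      field_simp at ht
      linear_combination ht
  obtain ⟨p, i₀, hiso, hp⟩ := h
  by_contra hcon
  have h0 : ∀ i, i ≠ i₀ → (M *ᵥ p) i = 0 := by
    intro i hi
    by_contra h
    exact hcon ⟨p, i₀, i, hiso, h, hp, hi⟩
  have h1 : (M *ᵥ p) i₀ = 0 := by
    rw [dotProduct, Finset.sum_eq_single i₀ (fun i _ hi => by rw [h0 i hi, mul_zero])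
      (by simp), hp, one_mul] at hiso
    exact hiso
  have h2 : M *ᵥ p = 0 := by
    funext i
    by_cases hi : i = i₀
    · rw [hi, h1]; rfl
    · exact h0 i hi
  have h3 : p = 0 := by
    have := congrArg (M⁻¹ *ᵥ ·) h2
    simpa [mulVec_mulVec, nonsing_inv_mul _ hdet] using this
  rw [h3] at hp
  exact zero_ne_one hp

end Pres

/-! ### Kernels: generation modulo the augmentation ideal -/

/-- A graded Nakayama lemma. The families `cR` and `cN` play the role of the projections to the
homogeneous components of the ring and of the module. If `K` is contained in the span of
`G` and `{a | cR 0 a = 0} • K`, then it is contained in the span of the components of the elements of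
`G`. -/
theorem graded_nakayama {R N : Type} [Ring R] [AddCommGroup N] [Module R N]
    (cR : ℕ → R → R) (cN : ℕ → N →+ N)
    (hmul : ∀ t a v, cN t (a • v) =
      ∑ q ∈ Finset.HasAntidiagonal.antidiagonal t, cR q.1 a • cN q.2 v)
    (hsum : ∀ v, v ∈ AddSubgroup.closure (Set.range fun t => cN t v))
    (K : Submodule R N) (G : Set N)
    (hG : ∀ v ∈ K, v ∈ Submodule.span R G ⊔
      Submodule.span R {u | ∃ a, cR 0 a = 0 ∧ ∃ f ∈ K, u = a • f}) :
    K ≤ Submodule.span R {u | ∃ g ∈ G, ∃ t, u = cN t g} := by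
  set T := Submodule.span R {u | ∃ g ∈ G, ∃ t, u = cN t g} with hT
  have main : ∀ t, ∀ v ∈ K, cN t v ∈ T := by
    intro t
    induction t using Nat.strong_induction_on with
    | _ t ih =>
    let Q : Submodule R N :=
      { carrier := {v | ∀ q ≤ t, cN q v ∈ T}
        add_mem' := fun {u v} hu hv q hq => by
          rw [map_add]; exact add_mem (hu q hq) (hv q hq)
        zero_mem' := fun q _ => by rw [map_zero]; exact zero_mem _
        smul_mem' := fun a v hv q hq => by
          rw [hmul]
          refine sum_mem fun r hr => T.smul_mem _ (hv _ ?_)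
          have := Finset.HasAntidiagonal.mem_antidiagonal.1 hr
          omega }
    have h1 : Submodule.span R G ≤ Q := by
      rw [Submodule.span_le]
      intro g hg q _
      exact Submodule.subset_span ⟨g, hg, q, rfl⟩
    have h2 : Submodule.span R {u | ∃ a, cR 0 a = 0 ∧ ∃ f ∈ K, u = a • f} ≤ Q := by
      rw [Submodule.span_le]
      rintro _ ⟨a, ha, f, hf, rfl⟩ q hq
      rw [hmul]
      refine sum_mem fun r hr => ?_
      have hr' := Finset.HasAntidiagonal.mem_antidiagonal.1 hr
      rcases Nat.eq_zero_or_pos r.1 with h0 | h0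
      · rw [h0, ha, zero_smul]; exact zero_mem _
      · exact T.smul_mem _ (ih r.2 (by omega) f hf)
    intro v hv
    exact sup_le h1 h2 (hG v hv) t le_rfl
  intro v hv
  have : AddSubgroup.closure (Set.range fun t => cN t v) ≤ T.toAddSubgroup := by
    rw [AddSubgroup.closure_le]
    rintro _ ⟨t, rfl⟩
    exact main t v hv
  exact this (hsum v)

/-- Let `E` be a left ideal contained in `Σ e_t R`, where the `e_t` are right linearly independent
elements of the left ideal generated by `S`, and let `R / E` be Noetherian. Then the kernel `K` of `f ↦ Σ f_i h_i` is generated by a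
finite set together with `S • K`. -/
theorem ker_of_free_ideal {R I : Type} [Ring R] (e : I → R) (E : Submodule R R)
    (hinj : ∀ f : I →₀ R, (f.sum fun t y => e t * y) = 0 → f = 0)
    (hE : ∀ y ∈ E, ∃ f : I →₀ R, y = f.sum fun t y => e t * y)
    (S : Set R) (hS : ∀ t, e t ∈ Submodule.span R S) [IsNoetherian R (R ⧸ E)]
    {m : ℕ} (h : Fin m → R) :
    ∃ G : Set (Fin m → R), G.Finite ∧ (∀ g ∈ G, g ∈ LinearMap.ker (Fintype.linearCombination R h)) ∧
      ∀ v ∈ LinearMap.ker (Fintype.linearCombination R h), v ∈ Submodule.span R G ⊔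
        Submodule.span R {u | ∃ a ∈ S, ∃ f ∈ LinearMap.ker (Fintype.linearCombination R h),
          u = a • f} := by
  set K := LinearMap.ker (Fintype.linearCombination R h) with hK
  let q : (Fin m → R) →ₗ[R] (Fin m → R ⧸ E) := LinearMap.pi fun i => E.mkQ ∘ₗ LinearMap.proj i
  have hfin : Module.Finite R (LinearMap.range (q.domRestrict K)) := inferInstance
  obtain ⟨r, s, hs⟩ := Module.Finite.exists_fin (R := R) (M := LinearMap.range (q.domRestrict K))
  have hlift : ∀ j, ∃ g : K, q.domRestrict K g = s j := fun j => (s j).2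
  choose g hg using hlift
  refine ⟨Set.range fun j => (g j : Fin m → R), Set.finite_range _, ?_, ?_⟩
  · rintro _ ⟨j, rfl⟩
    exact (g j).2
  intro v hv
  have hvr : (⟨q.domRestrict K ⟨v, hv⟩, ⟨_, rfl⟩⟩ : LinearMap.range (q.domRestrict K)) ∈
      Submodule.span R (Set.range s) := by rw [hs]; trivial
  obtain ⟨c, hc⟩ := (Submodule.mem_span_range_iff_exists_fun R).1 hvr
  have hc' : ∑ j, c j • q (g j) = q v := by
    have := congrArg Subtype.val hc
    simp only [AddSubmonoidClass.coe_finsetSum, SetLike.val_smul, ← hg] at this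
    exact this
  set v₁ := ∑ j, c j • (g j : Fin m → R) with hv₁
  have hv₁K : v₁ ∈ K := sum_mem fun j _ => K.smul_mem _ (g j).2
  have hv₁G : v₁ ∈ Submodule.span R (Set.range fun j => (g j : Fin m → R)) :=
    sum_mem fun j _ => Submodule.smul_mem _ _ (Submodule.subset_span ⟨j, rfl⟩)
  set v₂ := v - v₁ with hv₂
  have hv₂K : v₂ ∈ K := sub_mem hv hv₁K
  have hv₂E : ∀ i, v₂ i ∈ E := by
    intro i
    have : q v₂ = 0 := by
      rw [hv₂, map_sub, hv₁, map_sum]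
      simp only [map_smul, hc', sub_self]
    exact (Submodule.Quotient.mk_eq_zero E).1 (congrFun this i)
  choose f hf using fun i => hE _ (hv₂E i)
  classical
  let s₀ : Finset I := Finset.univ.biUnion fun i => (f i).support
  have hs₀ : ∀ t, t ∉ s₀ → ∀ i, f i t = 0 := by
    intro t ht i
    by_contra hne
    exact ht (Finset.mem_biUnion.2 ⟨i, Finset.mem_univ _, Finsupp.mem_support_iff.2 hne⟩)
  have hv₂s : v₂ = ∑ t ∈ s₀, e t • (fun i => f i t) := by
    funext i
    rw [hf i, Finsupp.sum_of_support_subset (s := s₀) (f i)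
      (Finset.subset_biUnion_of_mem (fun i => (f i).support) (Finset.mem_univ i)) _
      (fun _ _ => mul_zero _), Finset.sum_apply]
    rfl
  -- `0 = φ(v₂) = Σ e_t φ(v_t)`, and the `e_t` are right linearly independent.
  have hzero : ∀ t, Fintype.linearCombination R h (fun i => f i t) = 0 := by
    let F : I →₀ R := Finsupp.onFinset s₀
      (fun t => Fintype.linearCombination R h (fun i => f i t)) (by
        intro t ht
        by_contra hne
        apply ht
        have : (fun i => f i t) = 0 := funext fun i => hs₀ t hne i
        rw [this, map_zero])
    have hF : F = 0 := by
      apply hinj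
      rw [Finsupp.onFinset_sum _ (fun _ => mul_zero _)]
      have := (LinearMap.mem_ker.1 hv₂K)
      rw [hv₂s, map_sum] at this
      simpa only [map_smul, smul_eq_mul] using this
    intro t
    exact DFunLike.congr_fun hF t
  rw [show v = v₁ + v₂ by rw [hv₂]; abel]
  refine add_mem (Submodule.mem_sup_left hv₁G) (Submodule.mem_sup_right ?_)
  rw [hv₂s]
  refine sum_mem fun t _ => ?_
  have : Submodule.span R S ≤ Submodule.comap (LinearMap.toSpanSingleton R _ (fun i => f i t))
      (Submodule.span R {u | ∃ a ∈ S, ∃ f ∈ K, u = a • f}) := by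
    rw [Submodule.span_le]
    intro a ha
    exact Submodule.subset_span ⟨a, ha, _, hzero t, rfl⟩
  exact this (hS t)

section descent
variable {k R L : Type} [Field k] [Ring R] [Algebra k R] [Field L] [Algebra k L]

/-- The map `l ⊗ id : L ⊗ R → R` attached to a linear functional `l` on `L`. -/
def slice (l : L →ₗ[k] k) : L ⊗[k] R →ₗ[k] R :=
  (TensorProduct.lid k R).toLinearMap ∘ₗ l.rTensor R

theorem slice_tmul (l : L →ₗ[k] k) (c : L) (a : R) : slice l (c ⊗ₜ[k] a) = l c • a := by
  simp [slice]

theorem slice_mul_right (l : L →ₗ[k] k) (y : L ⊗[k] R) (a : R) :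
    slice l (y * (1 ⊗ₜ[k] a)) = slice l y * a := by
  induction y using TensorProduct.induction_on with
  | zero => simp
  | tmul c b => rw [Algebra.TensorProduct.tmul_mul_tmul, slice_tmul, slice_tmul, mul_one,
      smul_mul_assoc]
  | add y z hy hz => rw [add_mul, map_add, map_add, add_mul, hy, hz]

theorem slice_mul_left (l : L →ₗ[k] k) (y : L ⊗[k] R) (c : L) (a : R) :
    slice l ((c ⊗ₜ[k] a) * y) = a * slice (l ∘ₗ LinearMap.mulLeft k c) y := by
  induction y using TensorProduct.induction_on with
  | zero => simp
  | tmul c b => rw [Algebra.TensorProduct.tmul_mul_tmul, slice_tmul, slice_tmul, mul_smul_comm]; rfl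
  | add y z hy hz => rw [mul_add, map_add, map_add, mul_add, hy, hz]

theorem slice_eq_sum {ι : Type} [DecidableEq ι] (B : Module.Basis ι k L) (l : L →ₗ[k] k)
    (y : L ⊗[k] R) (s : Finset ι) (hs : (TensorProduct.equivFinsuppOfBasisLeft B y).support ⊆ s) :
    slice l y = ∑ t ∈ s, l (B t) • slice (B.coord t) y := by
  have h1 : y = (TensorProduct.equivFinsuppOfBasisLeft B y).sum fun i a => B i ⊗ₜ[k] a := by
    rw [← TensorProduct.equivFinsuppOfBasisLeft_symm_apply, LinearEquiv.symm_apply_apply]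
  conv_lhs => rw [h1, Finsupp.sum_of_support_subset _ hs _ (fun _ _ => TensorProduct.tmul_zero _ _)]
  rw [map_sum]
  refine Finset.sum_congr rfl fun t _ => ?_
  rw [slice_tmul, TensorProduct.equivFinsuppOfBasisLeft_apply]
  rfl

/-- The property of the kernel established in `ker_of_free_ideal` descends from `L ⊗ R` to `R`: the
slices of kernel vectors are kernel vectors, and finitely many slices of a vector span all of
them. -/
theorem ker_descent (S : Set R) {m : ℕ} (h : Fin m → R)
    (H : ∃ G : Set (Fin m → L ⊗[k] R), G.Finite ∧
      (∀ g ∈ G, g ∈ LinearMap.ker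
        (Fintype.linearCombination (L ⊗[k] R) fun i => (1 : L) ⊗ₜ[k] h i)) ∧
      ∀ v ∈ LinearMap.ker (Fintype.linearCombination (L ⊗[k] R) fun i => (1 : L) ⊗ₜ[k] h i),
        v ∈ Submodule.span (L ⊗[k] R) G ⊔
        Submodule.span (L ⊗[k] R) {u | ∃ a ∈ (fun a => (1 : L) ⊗ₜ[k] a) '' S,
          ∃ f ∈ LinearMap.ker
            (Fintype.linearCombination (L ⊗[k] R) fun i => (1 : L) ⊗ₜ[k] h i), u = a • f}) :
    ∃ G : Set (Fin m → R), G.Finite ∧ (∀ g ∈ G, g ∈ LinearMap.ker (Fintype.linearCombination R h)) ∧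
      ∀ v ∈ LinearMap.ker (Fintype.linearCombination R h), v ∈ Submodule.span R G ⊔
        Submodule.span R {u | ∃ a ∈ S, ∃ f ∈ LinearMap.ker (Fintype.linearCombination R h),
          u = a • f} := by
  classical
  obtain ⟨G', hfin, hG'K, hG'⟩ := H
  set K := LinearMap.ker (Fintype.linearCombination R h) with hK
  set K' := LinearMap.ker (Fintype.linearCombination (L ⊗[k] R) fun i => (1 : L) ⊗ₜ[k] h i)
    with hK'
  have hslice : ∀ v ∈ K', ∀ l : L →ₗ[k] k, (fun i => slice l (v i)) ∈ K := by
    intro v hv l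
    rw [hK', LinearMap.mem_ker, Fintype.linearCombination_apply] at hv
    rw [hK, LinearMap.mem_ker, Fintype.linearCombination_apply]
    have := congrArg (slice l) hv
    simpa only [map_sum, smul_eq_mul, slice_mul_right, map_zero] using this
  let B := Module.Basis.ofVectorSpace k L
  let supp : (Fin m → L ⊗[k] R) → Finset _ := fun g =>
    Finset.univ.biUnion fun i => (TensorProduct.equivFinsuppOfBasisLeft B (g i)).support
  let G : Set (Fin m → R) := ⋃ g ∈ G', (fun t i => slice (B.coord t) (g i)) '' (supp g : Set _)
  have hGspan : ∀ g ∈ G', ∀ l : L →ₗ[k] k, (fun i => slice l (g i)) ∈ Submodule.span R G := by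
    intro g hg l
    have : (fun i => slice l (g i)) =
        ∑ t ∈ supp g, l (B t) • (fun i => slice (B.coord t) (g i)) := by
      funext i
      rw [slice_eq_sum B l (g i) (supp g) (Finset.subset_biUnion_of_mem
        (fun i => (TensorProduct.equivFinsuppOfBasisLeft B (g i)).support) (Finset.mem_univ i)),
        Finset.sum_apply]
      rfl
    rw [this]
    refine sum_mem fun t ht => Submodule.smul_of_tower_mem _ _ (Submodule.subset_span ?_)
    exact Set.mem_biUnion hg ⟨t, ht, rfl⟩
  refine ⟨G, hfin.biUnion fun g _ => (Finset.finite_toSet _).image _, ?_, ?_⟩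
  · intro v hv
    obtain ⟨g, hg, t, -, rfl⟩ := Set.mem_iUnion₂.1 hv
    exact hslice g (hG'K g hg) _
  intro v hv
  set T := Submodule.span R G ⊔ Submodule.span R {u | ∃ a ∈ S, ∃ f ∈ K, u = a • f} with hT
  let Q : Submodule (L ⊗[k] R) (Fin m → L ⊗[k] R) :=
    { carrier := {v | ∀ l : L →ₗ[k] k, (fun i => slice l (v i)) ∈ T}
      add_mem' := fun {u v} hu hv l => by
        have : (fun i => slice l ((u + v) i)) =
            (fun i => slice l (u i)) + fun i => slice l (v i) := by
          funext i; simp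
        rw [this]; exact add_mem (hu l) (hv l)
      zero_mem' := fun l => by
        have : (fun i => slice l ((0 : Fin m → L ⊗[k] R) i)) = 0 := by funext i; simp
        rw [this]; exact zero_mem _
      smul_mem' := fun y v hv => by
        induction y using TensorProduct.induction_on with
        | zero =>
          intro l
          have : (fun i => slice l (((0 : L ⊗[k] R) • v) i)) = 0 := by funext i; simp
          rw [this]; exact zero_mem _
        | tmul c a =>
          intro l
          have : (fun i => slice l (((c ⊗ₜ[k] a) • v) i)) =
              a • fun i => slice (l ∘ₗ LinearMap.mulLeft k c) (v i) := by
            funext i; simp only [Pi.smul_apply, smul_eq_mul, slice_mul_left]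
          rw [this]; exact T.smul_mem _ (hv _)
        | add y z hy hz =>
          intro l
          have : (fun i => slice l (((y + z) • v) i)) =
            (fun i => slice l ((y • v) i)) + fun i => slice l ((z • v) i) := by
            funext i; simp [add_mul]
          rw [this]; exact add_mem (hy l) (hz l) }
  have h1 : Submodule.span (L ⊗[k] R) G' ≤ Q := by
    rw [Submodule.span_le]
    intro g hg l
    exact Submodule.mem_sup_left (hGspan g hg l)
  have h2 : Submodule.span (L ⊗[k] R) {u | ∃ a ∈ (fun a => (1 : L) ⊗ₜ[k] a) '' S,
          ∃ f ∈ K', u = a • f} ≤ Q := by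
    rw [Submodule.span_le]
    rintro _ ⟨_, ⟨a, ha, rfl⟩, f, hf, rfl⟩ l
    refine Submodule.mem_sup_right (Submodule.subset_span
      ⟨a, ha, _, hslice f hf (l ∘ₗ LinearMap.mulLeft k 1), ?_⟩)
    funext i
    simp only [Pi.smul_apply, smul_eq_mul, slice_mul_left]
  have hv' : (fun i => (1 : L) ⊗ₜ[k] v i) ∈ K' := by
    rw [hK', LinearMap.mem_ker, Fintype.linearCombination_apply]
    rw [hK, LinearMap.mem_ker, Fintype.linearCombination_apply] at hv
    have := congrArg (fun a => (1 : L) ⊗ₜ[k] a) hv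
    simpa [TensorProduct.tmul_sum] using this
  obtain ⟨l, hl⟩ := LinearMap.exists_leftInverse_of_injective (Algebra.linearMap k L)
    (LinearMap.ker_eq_bot.2 (algebraMap k L).injective)
  have hl1 : l 1 = 1 := by
    have := LinearMap.congr_fun hl 1
    simpa using this
  have := sup_le h1 h2 (hG' _ hv') l
  simpa only [slice_tmul, hl1, one_smul] using this

end descent

/-! ### Grading and coherence -/

namespace Pres

section grading
variable {F : Type} [CommRing F] {n : ℕ} {M : Matrix (Fin n) (Fin n) F}
    {R : Type} [Ring R] [Algebra F R] (P : Pres F M R)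
include P

/-- The grading of `R` as a coaction `δ : R → R[T]`, with all generators of degree `1`. -/
theorem exists_delta : ∃ δ : R →ₐ[F] Polynomial R,
    (∀ i, δ (P.X i) = Polynomial.monomial 1 (P.X i)) ∧ δ P.Z = Polynomial.monomial 1 P.Z := by
  refine P.lift (Polynomial R) (fun i => Polynomial.monomial 1 (P.X i))
    (Polynomial.monomial 1 P.Z) ?_ ?_
  · have := congrArg (Polynomial.monomial (R := R) 2) P.relM
    simpa only [map_sum, map_zero, Polynomial.monomial_mul_monomial, Polynomial.smul_monomial]
      using this
  · intro i
    rw [Polynomial.monomial_mul_monomial, Polynomial.monomial_mul_monomial, P.relZ]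

variable (δ : R →ₐ[F] Polynomial R) (hX : ∀ i, δ (P.X i) = Polynomial.monomial 1 (P.X i))
    (hZ : δ P.Z = Polynomial.monomial 1 P.Z)
include hX hZ

/-- The coefficient of `T^i` in `δ a` is homogeneous of degree `i`. -/
theorem delta_coeff (a : R) : ∀ i, δ ((δ a).coeff i) = Polynomial.monomial i ((δ a).coeff i) := by
  have aux : ∀ g q : R, δ g = Polynomial.monomial 1 g →
      (∀ i, δ ((δ q).coeff i) = Polynomial.monomial i ((δ q).coeff i)) →
      ∀ i, δ ((δ (g * q)).coeff i) = Polynomial.monomial i ((δ (g * q)).coeff i) := by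
    intro g q hg hq i
    rw [map_mul, hg]
    rcases i with _ | i
    · rw [Polynomial.mul_coeff_zero, Polynomial.coeff_monomial]
      simp
    · rw [Polynomial.coeff_monomial_mul, map_mul, hg, hq, Polynomial.monomial_mul_monomial,
        add_comm]
  refine P.left_ind_one
    { carrier := {a | ∀ i, δ ((δ a).coeff i) = Polynomial.monomial i ((δ a).coeff i)}
      add_mem' := fun {a b} ha hb i => by
        rw [map_add, Polynomial.coeff_add, map_add, map_add, ha, hb]
      zero_mem' := fun i => by simp
      smul_mem' := fun c a ha i => by
        rw [map_smul, Polynomial.coeff_smul, map_smul, ha, Polynomial.smul_monomial] } ?_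
    (fun i q hq => aux _ _ (hX i) hq) (fun q hq => aux _ _ hZ hq) a
  intro i
  rw [map_one, Polynomial.coeff_one]
  split_ifs with h
  · subst h; simp
  · simp

/-- Every element is the sum of its homogeneous components. -/
theorem eval_delta (a : R) : (δ a).eval 1 = a := by
  have aux : ∀ g q : R, δ g = Polynomial.monomial 1 g → (δ q).eval 1 = q →
      (δ (g * q)).eval 1 = g * q := by
    intro g q hg hq
    rw [map_mul, hg, Polynomial.eval, Polynomial.eval₂_mul_noncomm _ _
      (fun _ => Commute.one_right _)]
    change Polynomial.eval 1 _ * Polynomial.eval 1 _ = _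
    rw [hq, Polynomial.eval_monomial, one_pow, mul_one]
  refine P.left_ind_one
    { carrier := {a | (δ a).eval 1 = a}
      add_mem' := fun {a b} ha hb => by
        change (δ (a + b)).eval 1 = _
        rw [map_add, Polynomial.eval_add, ha, hb]
      zero_mem' := by simp
      smul_mem' := fun c a ha => by
        change (δ (c • a)).eval 1 = _
        rw [map_smul, Polynomial.eval_smul, ha] } (by simp)
    (fun i q hq => aux _ _ (hX i) hq) (fun q hq => aux _ _ hZ hq) a

end grading

section main
variable {F : Type} [Field F] {n : ℕ} {M : Matrix (Fin n) (Fin n) F}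
    {R : Type} [Ring R] [Algebra F R] (P : Pres F M R)
include P

theorem exists_homogeneous_generators (δ : R →ₐ[F] Polynomial R)
    (hX : ∀ i, δ (P.X i) = Polynomial.monomial 1 (P.X i))
    (hZ : δ P.Z = Polynomial.monomial 1 P.Z)
    (J : Submodule R R) (hJ : ∀ a ∈ J, ∀ i, (δ a).coeff i ∈ J) (hfg : J.FG) :
    ∃ (m : ℕ) (h : Fin m → R) (d : Fin m → ℕ),
      (∀ i, δ (h i) = Polynomial.monomial (d i) (h i)) ∧
      Submodule.span R (Set.range h) = J := by
  classical
  obtain ⟨s, hs⟩ := hfg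
  let s' : Finset R := s.biUnion fun a => (δ a).support.image fun i => (δ a).coeff i
  let φ := s'.equivFin.symm
  have hd : ∀ i, ∃ d, δ (φ i : R) = Polynomial.monomial d (φ i : R) := by
    intro i
    obtain ⟨a, ha, hi⟩ := Finset.mem_biUnion.1 (φ i).2
    obtain ⟨d, -, hd⟩ := Finset.mem_image.1 hi
    exact ⟨d, by rw [← hd]; exact P.delta_coeff δ hX hZ a d⟩
  choose d hd using hd
  refine ⟨_, fun i => (φ i : R), d, hd, le_antisymm ?_ ?_⟩
  · rw [Submodule.span_le]
    rintro _ ⟨i, rfl⟩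
    obtain ⟨a, ha, hi⟩ := Finset.mem_biUnion.1 (φ i).2
    obtain ⟨d, -, hd⟩ := Finset.mem_image.1 hi
    change (φ i : R) ∈ J
    rw [← hd]
    exact hJ a (hs ▸ Submodule.subset_span ha) d
  · rw [← hs, Submodule.span_le]
    intro a ha
    have h1 := P.eval_delta δ hX hZ a
    rw [Polynomial.eval_eq_sum, Polynomial.sum] at h1
    change a ∈ Submodule.span R _
    rw [← h1]
    refine sum_mem fun i hi => ?_
    rw [one_pow, mul_one]
    refine Submodule.subset_span ⟨φ.symm ⟨(δ a).coeff i, Finset.mem_biUnion.2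
      ⟨a, ha, Finset.mem_image_of_mem _ hi⟩⟩, ?_⟩
    simp

/-- The kernel `K` of `f ↦ Σ f_i h_i` is generated by a finite set together with `Σ X_i K`. -/
theorem ker_generators (hM : Mᵀ = -M) (hdet : IsUnit M.det) (hn : 2 ≤ n)
    {m : ℕ} (h : Fin m → R) :
    ∃ G : Set (Fin m → R), G.Finite ∧ (∀ g ∈ G, g ∈ LinearMap.ker (Fintype.linearCombination R h)) ∧
      ∀ v ∈ LinearMap.ker (Fintype.linearCombination R h), v ∈ Submodule.span R G ⊔
        Submodule.span R {u | ∃ a ∈ Set.range P.X,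
          ∃ f ∈ LinearMap.ker (Fintype.linearCombination R h), u = a • f} := by
  let L := AlgebraicClosure F
  let P' := P.baseChange L
  have hM' : (M.map (algebraMap F L))ᵀ = -(M.map (algebraMap F L)) := by
    rw [← Matrix.transpose_map, hM]
    ext i j
    simp
  have hdet' : IsUnit (M.map (algebraMap F L)).det := by
    have : (M.map (algebraMap F L)).det = algebraMap F L M.det :=
      ((algebraMap F L).map_det M).symm
    rw [this]
    exact hdet.map _
  obtain ⟨p, i₀, i₁, h1, h2, h3, h4⟩ := exists_isotropic hM' hdet' hn
  obtain ⟨I, e, E, hinj, hE, hS, hN⟩ := P'.key p i₀ i₁ hM' h1 h2 h3 h4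
  have := ker_of_free_ideal e E hinj hE (Set.range P'.X) hS fun i => (1 : L) ⊗ₜ[F] h i
  refine ker_descent (k := F) (L := L) (Set.range P.X) h ?_
  rw [← Set.range_comp]
  exact this

/-- Finitely generated homogeneous left ideals are finitely presented. -/
theorem coherent (hM : Mᵀ = -M) (hdet : IsUnit M.det) (δ : R →ₐ[F] Polynomial R)
    (hX : ∀ i, δ (P.X i) = Polynomial.monomial 1 (P.X i))
    (hZ : δ P.Z = Polynomial.monomial 1 P.Z)
    (J : Submodule R R) (hJ : ∀ a ∈ J, ∀ i, (δ a).coeff i ∈ J) (hfg : J.FG) :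
    Module.FinitePresentation R J := by
  rcases Nat.lt_or_ge n 2 with hn | hn
  · have := P.noeth_small (by omega)
    have : Module.Finite R J := Module.Finite.iff_fg.2 hfg
    exact Module.finitePresentation_of_finite R J
  obtain ⟨m, h, d, hd, hspan⟩ := P.exists_homogeneous_generators δ hX hZ J hJ hfg
  obtain ⟨G, hGfin, hGK, hG⟩ := P.ker_generators hM hdet hn h
  set φ := Fintype.linearCombination R h with hφ
  set K := LinearMap.ker φ with hK
  -- The components of `f ∈ R^m`, the `i`-th basis vector having degree `d i`.
  let cN : ℕ → (Fin m → R) →+ (Fin m → R) := fun t =>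
    { toFun := fun f i => (Polynomial.X ^ d i * δ (f i)).coeff t
      map_zero' := by funext i; simp
      map_add' := fun f g => by funext i; simp [mul_add] }
  have hcN : ∀ t f i, cN t f i = (Polynomial.X ^ d i * δ (f i)).coeff t := fun _ _ _ => rfl
  have hcNK : ∀ f ∈ K, ∀ t, cN t f ∈ K := by
    intro f hf t
    have h0 : φ f = 0 := hf
    change φ (cN t f) = 0
    rw [hφ, Fintype.linearCombination_apply] at h0 ⊢
    have := congrArg (fun a => (δ a).coeff t) h0
    simp only [map_sum, smul_eq_mul, map_mul, map_zero, Polynomial.finsetSum_coeff,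
      Polynomial.coeff_zero] at this
    rw [← this]
    refine Finset.sum_congr rfl fun i _ => ?_
    rw [hcN, hd, ← Polynomial.C_mul_X_pow_eq_monomial, ← mul_assoc, smul_eq_mul,
      ← Polynomial.coeff_mul_C, Polynomial.X_pow_mul, mul_assoc, Polynomial.X_pow_mul, mul_assoc]
  have hN : ∀ f : Fin m → R, ∃ N : ℕ, ∀ i, (Polynomial.X ^ d i * δ (f i)).natDegree < N := by
    intro f
    refine ⟨(Finset.univ.sup fun i => (Polynomial.X ^ d i * δ (f i)).natDegree) + 1, fun i => ?_⟩
    exact Nat.lt_succ_of_le (Finset.le_sup (f := fun i =>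
      (Polynomial.X ^ d i * δ (f i)).natDegree) (Finset.mem_univ i))
  choose N hN using hN
  have hle := graded_nakayama (fun t a => (δ a).coeff t) cN
    (by
      intro t a v
      funext i
      rw [hcN, Pi.smul_apply, smul_eq_mul, map_mul, ← mul_assoc, Polynomial.X_pow_mul, mul_assoc,
        Polynomial.coeff_mul, Finset.sum_apply]
      rfl)
    (by
      intro v
      have : v = ∑ t ∈ Finset.range (N v), cN t v := by
        funext i
        rw [Finset.sum_apply]
        have h1 := Polynomial.eval_eq_sum_range' (hN v i) 1
        rw [Polynomial.X_pow_mul, Polynomial.eval_mul_X_pow, P.eval_delta δ hX hZ] at h1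
        simpa [hcN, Polynomial.X_pow_mul] using h1
      have hmem : ∑ t ∈ Finset.range (N v), cN t v ∈
          AddSubgroup.closure (Set.range fun t => cN t v) :=
        sum_mem fun t _ => AddSubgroup.subset_closure (Set.mem_range_self t)
      rwa [← this] at hmem)
    K G
    (by
      intro v hv
      refine SetLike.le_def.1 (sup_le_sup le_rfl (Submodule.span_mono ?_)) (hG v hv)
      rintro _ ⟨_, ⟨i, rfl⟩, f, hf, rfl⟩
      refine ⟨P.X i, ?_, f, hf, rfl⟩
      simp [hX, Polynomial.coeff_monomial])
  have hKfg : K.FG := by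
    refine Submodule.fg_def.2 ⟨⋃ g ∈ G, (fun t => cN t g) '' Set.Iio (N g),
      hGfin.biUnion fun g _ => (Set.finite_Iio _).image _, le_antisymm ?_ ?_⟩
    · rw [Submodule.span_le]
      intro u hu
      obtain ⟨g, hg, t, -, rfl⟩ := Set.mem_iUnion₂.1 hu
      exact hcNK g (hGK g hg) t
    · refine hle.trans (Submodule.span_le.2 ?_)
      rintro _ ⟨g, hg, t, rfl⟩
      rcases lt_or_ge t (N g) with ht | ht
      · exact Submodule.subset_span (Set.mem_biUnion hg ⟨t, ht, rfl⟩)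
      · have : cN t g = 0 := by
          funext i
          exact Polynomial.coeff_eq_zero_of_natDegree_lt ((hN g i).trans_le ht)
        rw [this]
        exact zero_mem _
  have hrange : LinearMap.range φ = J := by
    rw [hφ, Fintype.range_linearCombination, hspan]
  subst hrange
  refine Module.finitePresentation_of_surjective φ.rangeRestrict φ.surjective_rangeRestrict ?_
  rwa [LinearMap.ker_rangeRestrict]

end main
end Pres

/-! ### The algebra `A[z]` -/

theorem vhat_eq_sum {k : Type} [Field k] {n : ℕ} (v : Vhat k n) :
    v = ∑ i, v.1 i • inc k n (x k n i) + v.2 • zv k n := by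
  refine Prod.ext ?_ ?_
  · funext j
    simp [inc, x, zv, Prod.fst_sum, Finset.sum_apply, Pi.single_apply]
  · simp [inc, x, zv, Prod.snd_sum]

/-- The coaction of the opposite algebra has the same coefficients. -/
theorem Pres.exists_delta_op {F : Type} [CommRing F] {n : ℕ} {M : Matrix (Fin n) (Fin n) F}
    {R : Type} [Ring R] [Algebra F R] (P : Pres F M R) (hM : Mᵀ = -M) (δ : R →ₐ[F] Polynomial R)
    (hX : ∀ i, δ (P.X i) = Polynomial.monomial 1 (P.X i))
    (hZ : δ P.Z = Polynomial.monomial 1 P.Z) :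
    ∃ δ' : Rᵐᵒᵖ →ₐ[F] Polynomial Rᵐᵒᵖ,
      (∀ i, δ' ((P.op hM).X i) = Polynomial.monomial 1 ((P.op hM).X i)) ∧
      δ' (P.op hM).Z = Polynomial.monomial 1 (P.op hM).Z ∧
      ∀ a i, (δ' a).coeff i = MulOpposite.op ((δ a.unop).coeff i) := by
  refine ⟨{ toRingHom := (Polynomial.opRingEquiv R).toRingHom.comp (RingHom.op δ.toRingHom)
            commutes' := fun r => ?_ }, fun i => ?_, ?_, fun a i => ?_⟩
  · change Polynomial.opRingEquiv R (MulOpposite.op (δ (algebraMap F R r))) = _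
    rw [AlgHom.commutes, Polynomial.algebraMap_apply, Polynomial.opRingEquiv_op_C,
      Polynomial.algebraMap_apply]
    rfl
  · change Polynomial.opRingEquiv R (MulOpposite.op (δ (P.X i))) = _
    rw [hX, Polynomial.opRingEquiv_op_monomial]
    rfl
  · change Polynomial.opRingEquiv R (MulOpposite.op (δ P.Z)) = _
    rw [hZ, Polynomial.opRingEquiv_op_monomial]
    rfl
  · change (Polynomial.opRingEquiv R (MulOpposite.op (δ a.unop))).coeff i = _
    rw [Polynomial.coeff_opRingEquiv]
    rfl

/-- The standard presentation of `B = A[z]`, the case of the zero derivation. -/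
def presB (k : Type) [Field k] (n : ℕ) (M : Matrix (Fin n) (Fin n) k) : Pres k M (B k n M 0) where
  X i := πB k n M 0 (TensorAlgebra.ι k (inc k n (x k n i)))
  Z := πB k n M 0 (TensorAlgebra.ι k (zv k n))
  relM := by
    have : πB k n M 0 (rhat k n M) = πB k n M 0 0 :=
      RingQuot.mkAlgHom_rel k (s := OreRel k n M 0) ⟨Or.inl rfl, rfl⟩
    rw [rhat, map_zero] at this
    simpa only [map_sum, map_smul, map_mul] using this
  relZ i := by
    have : πB k n M 0 (relz k n 0 i) = πB k n M 0 0 :=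
      RingQuot.mkAlgHom_rel k (s := OreRel k n M 0) ⟨Or.inr ⟨i, rfl⟩, rfl⟩
    rw [relz, LinearMap.zero_apply, map_zero, map_zero, sub_zero, map_zero, map_sub, map_mul,
      map_mul, sub_eq_zero] at this
    exact this
  gen := by
    set S := Algebra.adjoin k (insert (πB k n M 0 (TensorAlgebra.ι k (zv k n)))
      (Set.range fun i => πB k n M 0 (TensorAlgebra.ι k (inc k n (x k n i))))) with hS
    rw [eq_top_iff]
    rintro a -
    obtain ⟨a, rfl⟩ := RingQuot.mkAlgHom_surjective k (OreRel k n M 0) a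
    change πB k n M 0 a ∈ S
    induction a using TensorAlgebra.induction with
    | algebraMap r => rw [AlgHom.commutes]; exact S.algebraMap_mem r
    | add a b ha hb => rw [map_add]; exact add_mem ha hb
    | mul a b ha hb => rw [map_mul]; exact mul_mem ha hb
    | ι v =>
      rw [vhat_eq_sum v]
      simp only [map_add, map_sum, map_smul]
      refine add_mem (sum_mem fun i _ => S.smul_mem (Algebra.subset_adjoin (Or.inr ⟨i, rfl⟩)) _)
        (S.smul_mem (Algebra.subset_adjoin (Or.inl rfl)) _)
  lift E _ _ X' Z' h1 h2 := by
    let l : Vhat k n →ₗ[k] E :=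
      LinearMap.coprod (Fintype.linearCombination k X') (LinearMap.toSpanSingleton k E Z')
    have hlX : ∀ i, l (inc k n (x k n i)) = X' i := by
      intro i
      simp [l, inc, x, Fintype.linearCombination_apply_single]
    have hlZ : l (zv k n) = Z' := by
      simp [l, zv]
    refine ⟨RingQuot.liftAlgHom k ⟨TensorAlgebra.lift k l, ?_⟩, fun i => ?_, ?_⟩
    · rintro a b ⟨h | ⟨i, h⟩, rfl⟩
      · rw [h, map_zero, rhat]
        simpa only [map_sum, map_smul, map_mul, TensorAlgebra.lift_ι_apply, hlX] using h1
      · rw [h, map_zero, relz, LinearMap.zero_apply, map_zero, map_zero, sub_zero]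
        simp only [map_sub, map_mul, TensorAlgebra.lift_ι_apply, hlX, hlZ, h2, sub_self]
    · rw [πB, RingQuot.liftAlgHom_mkAlgHom_apply, TensorAlgebra.lift_ι_apply, hlX]
    · rw [πB, RingQuot.liftAlgHom_mkAlgHom_apply, TensorAlgebra.lift_ι_apply, hlZ]

/-- The image of the `d`-th tensor power of `V̂` is homogeneous of degree `d` for the coaction. -/
theorem delta_of_mem {k : Type} [Field k] {n : ℕ} {M : Matrix (Fin n) (Fin n) k}
    (δ : B k n M 0 →ₐ[k] Polynomial (B k n M 0))
    (hX : ∀ i, δ ((presB k n M).X i) = Polynomial.monomial 1 ((presB k n M).X i))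
    (hZ : δ (presB k n M).Z = Polynomial.monomial 1 (presB k n M).Z) (d : ℕ) :
    ∀ a ∈ Submodule.map (πB k n M 0).toLinearMap
      ((LinearMap.range (TensorAlgebra.ι k : Vhat k n →ₗ[k] TensorAlgebra k (Vhat k n))) ^ d),
      δ a = Polynomial.monomial d a := by
  have hι : ∀ v, δ (πB k n M 0 (TensorAlgebra.ι k v)) =
      Polynomial.monomial 1 (πB k n M 0 (TensorAlgebra.ι k v)) := by
    intro v
    have hX' : ∀ i, δ (πB k n M 0 (TensorAlgebra.ι k (inc k n (x k n i)))) =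
      Polynomial.monomial 1 (πB k n M 0 (TensorAlgebra.ι k (inc k n (x k n i)))) := hX
    have hZ' : δ (πB k n M 0 (TensorAlgebra.ι k (zv k n))) =
      Polynomial.monomial 1 (πB k n M 0 (TensorAlgebra.ι k (zv k n))) := hZ
    rw [vhat_eq_sum v]
    simp only [map_add, map_sum, map_smul, hX', hZ', Polynomial.smul_monomial]
  rintro _ ⟨a, ha, rfl⟩
  change δ (πB k n M 0 a) = Polynomial.monomial d (πB k n M 0 a)
  induction ha using Submodule.pow_induction_on_left' with
  | algebraMap r =>
    rw [AlgHom.commutes, AlgHom.commutes, Polynomial.algebraMap_apply,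
      Polynomial.monomial_zero_left]
  | add a b i _ _ ha hb => rw [map_add, map_add, map_add, ha, hb]
  | mem_mul m hm i a _ ha =>
    obtain ⟨v, rfl⟩ := hm
    rw [map_mul, map_mul, hι, ha, Polynomial.monomial_mul_monomial, add_comm]

theorem polynomial_extension_of_2CY_graded_coherent
    (hM : IsUnit M.det) (hMat : Mᵀ = -M)
    -- the grading on A[z] = B (with δ = 0) induced from the grading of T(V̂)
    (ℬ : ℕ → Submodule k (B k n M 0)) [GradedAlgebra ℬ]
    (hℬ : ∀ i : ℕ, ℬ i = Submodule.map (πB k n M 0).toLinearMap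
      ((LinearMap.range (TensorAlgebra.ι k : Vhat k n →ₗ[k] TensorAlgebra k (Vhat k n))) ^ i)) :
    -- graded left coherence
    (∀ I : Ideal (B k n M 0),
      (∀ a ∈ I, ∀ i : ℕ, (DirectSum.decompose ℬ a i : B k n M 0) ∈ I) →
      I.FG → Module.FinitePresentation (B k n M 0) I)
    -- graded right coherence
    ∧ (∀ J : Submodule (B k n M 0)ᵐᵒᵖ (B k n M 0),
      (∀ a ∈ J, ∀ i : ℕ, (DirectSum.decompose ℬ a i : B k n M 0) ∈ J) →
      J.FG → Module.FinitePresentation (B k n M 0)ᵐᵒᵖ J) := by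
  classical
  let P := presB k n M
  obtain ⟨δ, hX, hZ⟩ := P.exists_delta
  have hcoeff : ∀ a i, (δ a).coeff i = (DirectSum.decompose ℬ a i : B k n M 0) := by
    intro a i
    induction a using DirectSum.Decomposition.inductionOn ℬ with
    | zero => simp
    | homogeneous a =>
      rename_i j
      have ha : (a : B k n M 0) ∈ Submodule.map _ _ := (hℬ j).le a.2
      rw [delta_of_mem δ hX hZ j a ha, Polynomial.coeff_monomial]
      split_ifs with h
      · subst h
        rw [DirectSum.decompose_of_mem_same ℬ a.2]
      · rw [DirectSum.decompose_of_mem_ne ℬ a.2 h]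
    | add a b ha hb =>
      rw [map_add, Polynomial.coeff_add, ha, hb, DirectSum.decompose_add]
      rfl
  refine ⟨fun I hI hfg => P.coherent hMat hM δ hX hZ I (fun a ha i => ?_) hfg,
    fun J hJ hfg => ?_⟩
  · rw [hcoeff]
    exact hI a ha i
  obtain ⟨δ', hX', hZ', hδ'⟩ := P.exists_delta_op hMat δ hX hZ
  -- `a ↦ op a` identifies the right module `B` with the left regular module of `Bᵐᵒᵖ`.
  let ψ : B k n M 0 ≃ₗ[(B k n M 0)ᵐᵒᵖ] (B k n M 0)ᵐᵒᵖ :=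
    { MulOpposite.opAddEquiv with map_smul' := fun _ _ => rfl }
  have := (P.op hMat).coherent hMat hM δ' hX' hZ' (J.map ψ.toLinearMap) (by
    rintro _ ⟨a, ha, rfl⟩ i
    rw [hδ']
    refine ⟨_, hJ a ha i, ?_⟩
    rw [← hcoeff]
    rfl) (hfg.map _)
  exact Module.FinitePresentation.of_equiv (R := (B k n M 0)ᵐᵒᵖ) (M := J.map ψ.toLinearMap) (N := J)
    (ψ.submoduleMap J).symm

end
end
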